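/- arXiv:1612.04008 — 4 statements merged into one kernel-verified Lean document; each statement's English description precedes it below -/
import Mathlib

section
/- Let n be a positive integer and s ∈ (0,1) with n > 2s. For every real σ > 0 with σ ≠ n−2s there exists a constant C > 0 such that for all y ∈ ℝ^n: ∫_{ℝ^n} |y−z|^{−(n−2s)} (1+|z|)^{−(2s+σ)} dz ≤ C (1+|y|)^{−min(σ, n−2s)}. -/
/-!
Write `d` for the dimension and `R = 1 + ‖y‖`, and split the space into three regions. On the ball
of radius `R / 2` around `y` the weight is at most `(R / 2) ^ (-b)` and the kernel `‖y - z‖ ^ (-a)`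
has integral of order `R ^ (d - a)`. On the rest of the ball of radius `2 * R` around `0` the kernel
is at most `(R / 2) ^ (-a)`, while the weight has integral of order `R ^ max (d - b) 0`; this is
where `b = d` would produce a logarithm. Outside that ball the integrand is at most a constant times
`‖z‖ ^ (-(a + b))`, whose integral is of order `R ^ (d - a - b)`.
-/

open MeasureTheory Metric Set Module
open scoped Pointwise

lemma measurePreserving_sub_left_restrict_ball {G : Type*} [SeminormedAddCommGroup G]
    [MeasurableSpace G] [BorelSpace G] (μ : Measure G) [μ.IsAddLeftInvariant] [μ.IsNegInvariant]
    (y : G) (r : ℝ) :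
    MeasurePreserving (y - ·) (μ.restrict (ball y r)) (μ.restrict (ball 0 r)) := by
  have preimage_ball : (y - ·) ⁻¹' ball 0 r = ball y r := by
    ext z
    rw [mem_preimage, mem_ball_zero_iff, mem_ball', dist_eq_norm]
  rw [← preimage_ball]
  exact (Measure.measurePreserving_sub_left μ y).restrict_preimage measurableSet_ball

lemma integrableOn_ball_one_add_norm_rpow {E : Type*} [SeminormedAddCommGroup E] [ProperSpace E]
    [MeasurableSpace E] [OpensMeasurableSpace E] (μ : Measure E) [IsFiniteMeasureOnCompacts μ]
    (p r : ℝ) :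
    IntegrableOn (fun z : E ↦ (1 + ‖z‖) ^ p) (ball 0 r) μ := by
  have continuous_weight : Continuous fun z : E ↦ (1 + ‖z‖) ^ p :=
    (continuous_const.add continuous_norm).rpow_const fun z ↦
      .inl (add_pos_of_pos_of_nonneg one_pos (norm_nonneg z)).ne'
  exact (continuous_weight.continuousOn.integrableOn_compact' (isCompact_closedBall 0 r)
    measurableSet_closedBall).mono_set ball_subset_closedBall

section NormPowers

variable {E : Type*} [NormedAddCommGroup E] [NormedSpace ℝ E] [FiniteDimensional ℝ E]
  [MeasurableSpace E] [BorelSpace E] (μ : Measure E) [μ.IsAddHaarMeasure]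

lemma setIntegral_smul_set_norm_rpow (p : ℝ) {r : ℝ} (hr : 0 < r) (s : Set E) :
    ∫ z in r • s, ‖z‖ ^ p ∂μ = r ^ (finrank ℝ E + p) * ∫ z in s, ‖z‖ ^ p ∂μ := by
  have change_of_variables :=
    Measure.setIntegral_comp_smul_of_pos μ (fun z : E ↦ ‖z‖ ^ p) s hr
  simp only [norm_smul, Real.norm_of_nonneg hr.le, Real.mul_rpow hr.le (norm_nonneg _),
    integral_const_mul, smul_eq_mul] at change_of_variables
  rw [Real.rpow_add hr, Real.rpow_natCast, mul_assoc, change_of_variables,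
    mul_inv_cancel_left₀ (by positivity)]

lemma setIntegral_ball_norm_rpow (p : ℝ) {r : ℝ} (hr : 0 < r) :
    ∫ z in ball (0 : E) r, ‖z‖ ^ p ∂μ =
      r ^ (finrank ℝ E + p) * ∫ z in ball (0 : E) 1, ‖z‖ ^ p ∂μ := by
  rw [← setIntegral_smul_set_norm_rpow μ p hr, smul_unitBall_of_pos hr]

lemma setIntegral_compl_ball_norm_rpow (p : ℝ) {r : ℝ} (hr : 0 < r) :
    ∫ z in (ball (0 : E) r)ᶜ, ‖z‖ ^ p ∂μ =
      r ^ (finrank ℝ E + p) * ∫ z in (ball (0 : E) 1)ᶜ, ‖z‖ ^ p ∂μ := by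
  rw [← setIntegral_smul_set_norm_rpow μ p hr, compl_eq_univ_sdiff (ball (0 : E) 1),
    smul_set_sdiff₀ hr.ne', smul_set_univ₀ hr.ne', smul_unitBall_of_pos hr, compl_eq_univ_sdiff]

lemma integrableOn_ball_norm_rpow_neg [Nontrivial E] {p : ℝ} (hp : p < finrank ℝ E) (r : ℝ) :
    IntegrableOn (fun z : E ↦ ‖z‖ ^ (-p)) (ball 0 r) μ := by
  refine integrableOn_ball_of_norm_le_rpow (C := 1) finrank_pos hp (ae_of_all _ fun z ↦ ?_)
    (Measurable.aestronglyMeasurable (by fun_prop))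
  rw [Real.norm_of_nonneg (by positivity), one_mul]

lemma integrableOn_compl_ball_norm_rpow_neg {p r : ℝ} (hp : finrank ℝ E < p) (hr : 0 < r) :
    IntegrableOn (fun z : E ↦ ‖z‖ ^ (-p)) (ball 0 r)ᶜ μ := by
  have neg_p_nonpos : -p ≤ 0 := neg_nonpos.2 ((Nat.cast_nonneg _).trans hp.le)
  refine ((integrable_one_add_norm hp).const_mul ((1 / r + 1) ^ p)).integrableOn.mono'
    (Measurable.aestronglyMeasurable (by fun_prop))
    ((ae_restrict_mem measurableSet_ball.compl).mono fun z hz ↦ ?_)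
  have hrz : r ≤ ‖z‖ := by simpa using hz
  have hz0 : 0 < ‖z‖ := hr.trans_le hrz
  have one_add_norm_le : 1 + ‖z‖ ≤ (1 / r + 1) * ‖z‖ := by
    have : 1 ≤ 1 / r * ‖z‖ := by rwa [one_div_mul_eq_div, one_le_div hr]
    linarith
  calc
    ‖‖z‖ ^ (-p)‖ = (1 / r + 1) ^ p * ((1 / r + 1) * ‖z‖) ^ (-p) := by
      rw [Real.norm_of_nonneg (by positivity), Real.mul_rpow (by positivity) hz0.le, ← mul_assoc,
        ← Real.rpow_add (by positivity), add_neg_cancel, Real.rpow_zero, one_mul]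
    _ ≤ (1 / r + 1) ^ p * (1 + ‖z‖) ^ (-p) := by
      gcongr ?_ * ?_
      exact Real.rpow_le_rpow_of_nonpos (by positivity) one_add_norm_le neg_p_nonpos

lemma exists_setIntegral_ball_one_add_norm_rpow_neg_le {b : ℝ} (hb0 : 0 ≤ b)
    (hb : b ≠ finrank ℝ E) :
    ∃ C ≥ 0, ∀ r > 0, ∫ z in ball (0 : E) r, (1 + ‖z‖) ^ (-b) ∂μ ≤
      C * r ^ max (finrank ℝ E - b) 0 := by
  rcases hb.lt_or_gt with hbd | hbd
  · have : Nontrivial E := nontrivial_of_finrank_pos (R := ℝ) (by exact_mod_cast hb0.trans_lt hbd)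
    refine ⟨∫ z in ball (0 : E) 1, ‖z‖ ^ (-b) ∂μ, integral_nonneg fun _ ↦ by positivity,
      fun r hr ↦ ?_⟩
    rw [max_eq_left (sub_nonneg.2 hbd.le), mul_comm, sub_eq_add_neg,
      ← setIntegral_ball_norm_rpow μ (-b) hr]
    refine integral_mono_of_nonneg (ae_of_all _ fun _ ↦ by positivity)
      (integrableOn_ball_norm_rpow_neg μ hbd r) (ae_restrict_of_ae ?_)
    filter_upwards [Measure.ae_ne μ 0] with z hz
    exact Real.rpow_le_rpow_of_nonpos (norm_pos_iff.2 hz) (by linarith) (by linarith)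
  · refine ⟨∫ z, (1 + ‖z‖) ^ (-b) ∂μ, integral_nonneg fun _ ↦ by positivity, fun r _ ↦ ?_⟩
    rw [max_eq_right (sub_nonpos.2 hbd.le), Real.rpow_zero, mul_one]
    exact setIntegral_le_integral (integrable_one_add_norm hbd) (ae_of_all _ fun _ ↦ by positivity)

lemma integrableOn_ball_norm_sub_rpow_neg [Nontrivial E] {p : ℝ} (hp : p < finrank ℝ E) (y : E)
    (r : ℝ) :
    IntegrableOn (fun z ↦ ‖y - z‖ ^ (-p)) (ball y r) μ :=
  (measurePreserving_sub_left_restrict_ball μ y r).integrable_comp_of_integrable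
    (integrableOn_ball_norm_rpow_neg μ hp r)

lemma setIntegral_ball_norm_sub_rpow (p : ℝ) (y : E) {r : ℝ} (hr : 0 < r) :
    ∫ z in ball y r, ‖y - z‖ ^ p ∂μ =
      r ^ (finrank ℝ E + p) * ∫ z in ball (0 : E) 1, ‖z‖ ^ p ∂μ := by
  rw [← setIntegral_ball_norm_rpow μ p hr]
  exact (measurePreserving_sub_left_restrict_ball μ y r).integral_comp
    (MeasurableEquiv.subLeft y).measurableEmbedding (‖·‖ ^ p)

end NormPowers

/-- The Riesz kernel `‖y - z‖ ^ (-a)` times the polynomially decaying weight `(1 + ‖z‖) ^ (-b)`,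
as a function of the integration variable `z`. For `0 < a` it takes the junk value `0` at
`z = y`. -/
noncomputable def weightedRieszKernel {E : Type*} [SeminormedAddCommGroup E] (a b : ℝ) (y z : E) :
    ℝ :=
  ‖y - z‖ ^ (-a) * (1 + ‖z‖) ^ (-b)

namespace weightedRieszKernel

section Pointwise

variable {E : Type*} [SeminormedAddCommGroup E] {a b : ℝ} {y z : E}

lemma nonneg (a b : ℝ) (y z : E) : 0 ≤ weightedRieszKernel a b y z := by
  unfold weightedRieszKernel
  positivity

lemma le_of_mem_ball (hb : 0 ≤ b) (hz : z ∈ ball y ((1 + ‖y‖) / 2)) :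
    weightedRieszKernel a b y z ≤ ((1 + ‖y‖) / 2) ^ (-b) * ‖y - z‖ ^ (-a) := by
  have half_le : (1 + ‖y‖) / 2 ≤ 1 + ‖z‖ := by
    rw [mem_ball', dist_eq_norm] at hz
    linarith [norm_sub_norm_le y z]
  rw [weightedRieszKernel, mul_comm]
  gcongr ?_ * _
  exact Real.rpow_le_rpow_of_nonpos (by positivity) half_le (by linarith)

lemma le_of_notMem_ball (ha : 0 ≤ a) (hz : z ∉ ball y ((1 + ‖y‖) / 2)) :
    weightedRieszKernel a b y z ≤ ((1 + ‖y‖) / 2) ^ (-a) * (1 + ‖z‖) ^ (-b) := by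
  rw [mem_ball', dist_eq_norm, not_lt] at hz
  unfold weightedRieszKernel
  gcongr ?_ * _
  exact Real.rpow_le_rpow_of_nonpos (by positivity) hz (by linarith)

lemma le_of_notMem_ball_zero (ha : 0 ≤ a) (hb : 0 ≤ b) (hz : z ∉ ball 0 (2 * (1 + ‖y‖))) :
    weightedRieszKernel a b y z ≤ 2 ^ a * ‖z‖ ^ (-(a + b)) := by
  rw [mem_ball_zero_iff, not_lt] at hz
  have hz0 : 0 < ‖z‖ := by linarith [norm_nonneg y]
  have half_norm_le : ‖z‖ / 2 ≤ ‖y - z‖ := by linarith [norm_sub_norm_le z y, norm_sub_rev y z]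
  calc
    weightedRieszKernel a b y z ≤ (‖z‖ / 2) ^ (-a) * ‖z‖ ^ (-b) := by
      unfold weightedRieszKernel
      gcongr ?_ * ?_
      · exact Real.rpow_le_rpow_of_nonpos (by positivity) half_norm_le (by linarith)
      · exact Real.rpow_le_rpow_of_nonpos hz0 (by linarith) (by linarith)
    _ = 2 ^ a * ‖z‖ ^ (-(a + b)) := by
      rw [Real.div_rpow hz0.le zero_le_two, Real.rpow_neg zero_le_two, div_inv_eq_mul, neg_add,
        Real.rpow_add hz0]
      ring

lemma ball_subset_ball_zero (y : E) : ball y ((1 + ‖y‖) / 2) ⊆ ball 0 (2 * (1 + ‖y‖)) :=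
  ball_subset_ball' (by rw [dist_zero_right]; linarith [norm_nonneg y])

end Pointwise

section Domination

variable {E : Type*} [SeminormedAddCommGroup E] [MeasurableSpace E] [OpensMeasurableSpace E]
  (μ : Measure E) {a b : ℝ}

lemma integrableOn_of_le {g : E → ℝ} {s : Set E} {y : E} (hs : MeasurableSet s)
    (hg : IntegrableOn g s μ) (hle : ∀ z ∈ s, weightedRieszKernel a b y z ≤ g z) :
    IntegrableOn (weightedRieszKernel a b y) s μ := by
  have measurable_kernel : Measurable (weightedRieszKernel a b y) := by
    have measurable_norm_sub : Measurable fun z ↦ ‖y - z‖ :=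
      (continuous_const.sub continuous_id).norm.measurable
    unfold weightedRieszKernel
    fun_prop
  refine hg.mono' measurable_kernel.aestronglyMeasurable
    ((ae_restrict_mem hs).mono fun z hz ↦ ?_)
  rw [Real.norm_of_nonneg (nonneg a b y z)]
  exact hle z hz

lemma setIntegral_le_of_le {g : E → ℝ} {s : Set E} {y : E} (hs : MeasurableSet s)
    (hg : IntegrableOn g s μ) (hle : ∀ z ∈ s, weightedRieszKernel a b y z ≤ g z) :
    ∫ z in s, weightedRieszKernel a b y z ∂μ ≤ ∫ z in s, g z ∂μ :=
  setIntegral_mono_on (integrableOn_of_le μ hs hg hle) hg hs hle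

lemma integral_eq_add_add {y : E} (h : Integrable (weightedRieszKernel a b y) μ) :
    ∫ z, weightedRieszKernel a b y z ∂μ =
      ∫ z in ball y ((1 + ‖y‖) / 2), weightedRieszKernel a b y z ∂μ +
      ∫ z in ball 0 (2 * (1 + ‖y‖)) \ ball y ((1 + ‖y‖) / 2), weightedRieszKernel a b y z ∂μ +
      ∫ z in (ball 0 (2 * (1 + ‖y‖)))ᶜ, weightedRieszKernel a b y z ∂μ := by
  rw [setIntegral_sdiff measurableSet_ball h.integrableOn (ball_subset_ball_zero y),
    add_sub_cancel, integral_add_compl measurableSet_ball h]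

end Domination

section Integral

variable {E : Type*} [NormedAddCommGroup E] [NormedSpace ℝ E] [FiniteDimensional ℝ E]
  [MeasurableSpace E] [BorelSpace E] (μ : Measure E) [μ.IsAddHaarMeasure] {a b : ℝ}

lemma integrableOn_ball [Nontrivial E] (ha : a < finrank ℝ E) (hb : 0 ≤ b) (y : E) :
    IntegrableOn (weightedRieszKernel a b y) (ball y ((1 + ‖y‖) / 2)) μ :=
  integrableOn_of_le μ measurableSet_ball
    ((integrableOn_ball_norm_sub_rpow_neg μ ha y _).const_mul _) fun _ ↦ le_of_mem_ball hb

lemma integrableOn_sdiff_ball (ha : 0 ≤ a) (b : ℝ) (y : E) (r : ℝ) :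
    IntegrableOn (weightedRieszKernel a b y) (ball 0 r \ ball y ((1 + ‖y‖) / 2)) μ :=
  integrableOn_of_le μ (measurableSet_ball.diff measurableSet_ball)
    (((integrableOn_ball_one_add_norm_rpow μ (-b) r).mono_set sdiff_subset).const_mul _)
    fun _ hz ↦ le_of_notMem_ball ha hz.2

lemma integrableOn_compl_ball (ha : 0 ≤ a) (hb : 0 ≤ b) (hab : finrank ℝ E < a + b) (y : E) :
    IntegrableOn (weightedRieszKernel a b y) (ball 0 (2 * (1 + ‖y‖)))ᶜ μ :=
  integrableOn_of_le μ measurableSet_ball.compl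
    ((integrableOn_compl_ball_norm_rpow_neg μ hab (by positivity)).const_mul _)
    fun _ ↦ le_of_notMem_ball_zero ha hb

lemma exists_setIntegral_ball_le [Nontrivial E] (ha : a < finrank ℝ E) (hb : 0 ≤ b) :
    ∃ C ≥ 0, ∀ y : E, ∫ z in ball y ((1 + ‖y‖) / 2), weightedRieszKernel a b y z ∂μ ≤
      C * (1 + ‖y‖) ^ (-(a + b - finrank ℝ E)) := by
  refine ⟨(1 / 2) ^ (-(a + b - finrank ℝ E)) * ∫ z in ball (0 : E) 1, ‖z‖ ^ (-a) ∂μ,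
    mul_nonneg (by positivity) (integral_nonneg fun _ ↦ by positivity), fun y ↦ ?_⟩
  have radius_pos : 0 < (1 + ‖y‖) / 2 := by positivity
  refine (setIntegral_le_of_le μ measurableSet_ball
    ((integrableOn_ball_norm_sub_rpow_neg μ ha y _).const_mul _)
    fun _ ↦ le_of_mem_ball hb).trans_eq ?_
  rw [integral_const_mul, setIntegral_ball_norm_sub_rpow μ (-a) y radius_pos, ← mul_assoc,
    ← Real.rpow_add radius_pos, mul_right_comm, ← Real.mul_rpow (by norm_num) (by positivity)]
  ring_nf

lemma exists_setIntegral_compl_ball_le (ha : 0 ≤ a) (hb : 0 ≤ b) (hab : finrank ℝ E < a + b) :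
    ∃ C ≥ 0, ∀ y : E, ∫ z in (ball 0 (2 * (1 + ‖y‖)))ᶜ, weightedRieszKernel a b y z ∂μ ≤
      C * (1 + ‖y‖) ^ (-(a + b - finrank ℝ E)) := by
  refine ⟨2 ^ a * 2 ^ (-(a + b - finrank ℝ E)) *
      ∫ z in (ball (0 : E) 1)ᶜ, ‖z‖ ^ (-(a + b)) ∂μ,
    mul_nonneg (by positivity) (integral_nonneg fun _ ↦ by positivity), fun y ↦ ?_⟩
  have radius_pos : 0 < 2 * (1 + ‖y‖) := by positivity
  refine (setIntegral_le_of_le μ measurableSet_ball.compl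
    ((integrableOn_compl_ball_norm_rpow_neg μ hab radius_pos).const_mul _)
    fun _ ↦ le_of_notMem_ball_zero ha hb).trans_eq ?_
  rw [integral_const_mul, setIntegral_compl_ball_norm_rpow μ _ radius_pos,
    Real.mul_rpow zero_le_two (by positivity)]
  ring_nf

lemma exists_setIntegral_sdiff_ball_le (ha : 0 ≤ a) (hb0 : 0 ≤ b) (hb : b ≠ finrank ℝ E) :
    ∃ C ≥ 0, ∀ y : E, ∫ z in ball 0 (2 * (1 + ‖y‖)) \ ball y ((1 + ‖y‖) / 2),
      weightedRieszKernel a b y z ∂μ ≤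
        C * (1 + ‖y‖) ^ (-min (a + b - finrank ℝ E) a) := by
  obtain ⟨C, hC0, weight_bound⟩ := exists_setIntegral_ball_one_add_norm_rpow_neg_le μ hb0 hb
  refine ⟨2 ^ a * C * 2 ^ max (finrank ℝ E - b) 0, by positivity, fun y ↦ ?_⟩
  have exponent_eq : -min (a + b - finrank ℝ E) a = -a + max (finrank ℝ E - b) 0 := by
    rw [← max_neg_neg, ← max_add_add_left]
    ring_nf
  have weight_integrable := integrableOn_ball_one_add_norm_rpow μ (E := E) (-b) (2 * (1 + ‖y‖))
  calc
    _ ≤ ∫ z in ball 0 (2 * (1 + ‖y‖)) \ ball y ((1 + ‖y‖) / 2),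
        ((1 + ‖y‖) / 2) ^ (-a) * (1 + ‖z‖) ^ (-b) ∂μ :=
      setIntegral_le_of_le μ (measurableSet_ball.diff measurableSet_ball)
        ((weight_integrable.mono_set sdiff_subset).const_mul _)
        fun _ hz ↦ le_of_notMem_ball ha hz.2
    _ ≤ ((1 + ‖y‖) / 2) ^ (-a) * ∫ z in ball (0 : E) (2 * (1 + ‖y‖)), (1 + ‖z‖) ^ (-b) ∂μ := by
      rw [integral_const_mul]
      gcongr ?_ * ?_
      exact setIntegral_mono_set weight_integrable (ae_of_all _ fun _ ↦ by positivity)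
        sdiff_subset.eventuallyLE
    _ ≤ ((1 + ‖y‖) / 2) ^ (-a) * (C * (2 * (1 + ‖y‖)) ^ max (finrank ℝ E - b) 0) := by
      gcongr
      exact weight_bound _ (by positivity)
    _ = _ := by
      rw [exponent_eq, Real.rpow_add (by positivity), Real.div_rpow (by positivity) zero_le_two,
        Real.mul_rpow zero_le_two (by positivity), Real.rpow_neg zero_le_two, div_inv_eq_mul]
      ring

lemma integrable (ha0 : 0 ≤ a) (ha : a < finrank ℝ E) (hab : finrank ℝ E < a + b) (y : E) :
    Integrable (weightedRieszKernel a b y) μ := by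
  have : Nontrivial E := nontrivial_of_finrank_pos (R := ℝ) (by exact_mod_cast ha0.trans_lt ha)
  have hb : 0 ≤ b := by linarith
  rw [← integrableOn_univ, ← union_compl_self (ball 0 (2 * (1 + ‖y‖))),
    ← union_sdiff_cancel (ball_subset_ball_zero y)]
  refine ((integrableOn_ball μ ha hb y).union (integrableOn_sdiff_ball μ ha0 b y _)).union ?_
  rw [union_sdiff_cancel (ball_subset_ball_zero y)]
  exact integrableOn_compl_ball μ ha0 hb hab y

end Integral

end weightedRieszKernel

theorem stmt_1_general {E : Type*} [NormedAddCommGroup E] [NormedSpace ℝ E]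
    [FiniteDimensional ℝ E] [MeasurableSpace E] [BorelSpace E] (μ : Measure E)
    [μ.IsAddHaarMeasure] {a b : ℝ} (ha0 : 0 ≤ a) (ha : a < finrank ℝ E)
    (hab : finrank ℝ E < a + b) (hb : b ≠ finrank ℝ E) :
    ∃ C > 0, ∀ y : E,
      Integrable (fun z ↦ ‖y - z‖ ^ (-a) * (1 + ‖z‖) ^ (-b)) μ ∧
        ∫ z, ‖y - z‖ ^ (-a) * (1 + ‖z‖) ^ (-b) ∂μ ≤
          C * (1 + ‖y‖) ^ (-min (a + b - finrank ℝ E) a) := by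
  have : Nontrivial E := nontrivial_of_finrank_pos (R := ℝ) (by exact_mod_cast ha0.trans_lt ha)
  have hb0 : 0 ≤ b := by linarith
  obtain ⟨C₁, hC₁, near_bound⟩ := weightedRieszKernel.exists_setIntegral_ball_le μ ha hb0
  obtain ⟨C₂, hC₂, mid_bound⟩ := weightedRieszKernel.exists_setIntegral_sdiff_ball_le μ ha0 hb0 hb
  obtain ⟨C₃, hC₃, far_bound⟩ :=
    weightedRieszKernel.exists_setIntegral_compl_ball_le μ ha0 hb0 hab
  refine ⟨C₁ + C₂ + C₃ + 1, by positivity, fun y ↦ ?_⟩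
  have kernel_integrable := weightedRieszKernel.integrable μ ha0 ha hab y
  refine ⟨kernel_integrable, ?_⟩
  have decay_le : (1 + ‖y‖) ^ (-(a + b - finrank ℝ E)) ≤
      (1 + ‖y‖) ^ (-min (a + b - finrank ℝ E) a) :=
    Real.rpow_le_rpow_of_exponent_le (by linarith [norm_nonneg y]) (neg_le_neg (min_le_left _ _))
  have decay_nonneg : 0 ≤ (1 + ‖y‖) ^ (-min (a + b - finrank ℝ E) a) := by positivity
  calc
    _ = _ := weightedRieszKernel.integral_eq_add_add μ kernel_integrable
    _ ≤ _ := add_le_add_three (near_bound y) (mid_bound y) (far_bound y)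
    _ ≤ _ := by
      linarith [mul_le_mul_of_nonneg_left decay_le hC₁, mul_le_mul_of_nonneg_left decay_le hC₃]

theorem stmt_1 (n : ℕ) (hn0 : 0 < n) (s σ : ℝ) (hs0 : 0 < s) (hs1 : s < 1)
    (hns : 2 * s < (n : ℝ)) (hσ : 0 < σ) (hσne : σ ≠ (n : ℝ) - 2 * s) :
    ∃ C > (0 : ℝ), ∀ y : EuclideanSpace ℝ (Fin n),
      (∫ z : EuclideanSpace ℝ (Fin n),
          ‖y - z‖ ^ (-((n : ℝ) - 2 * s)) * (1 + ‖z‖) ^ (-(2 * s + σ))) ≤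
        C * (1 + ‖y‖) ^ (-(min σ ((n : ℝ) - 2 * s))) := by
  obtain ⟨C, hC, bound⟩ := stmt_1_general (volume : Measure (EuclideanSpace ℝ (Fin n)))
    (a := n - 2 * s) (b := 2 * s + σ) (by linarith) (by simpa using hs0)
    (by rw [finrank_euclideanSpace_fin]; linarith)
    (by rw [finrank_euclideanSpace_fin]; contrapose! hσne; linarith)
  rw [finrank_euclideanSpace_fin, show n - 2 * s + (2 * s + σ) - n = σ by ring] at bound
  exact ⟨C, hC, fun y ↦ (bound y).2⟩
end

section
/- For every θ > k there exists a constant C = C(θ, k, n) > 1, independent of m and l, such that for all i and all y ∈ B_i ∩ Ω_i: (1+|y−X^i|)^{−θ} ≤ Σ_{j=1}^{(m+1)^k} (1+|y−X^j|)^{−θ} ≤ C (1+|y−X^i|)^{−θ}. -/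
/-- `X` enumerates the lattice points `{d·q : q ∈ ([0,m+1)^k × {0}) ∩ ℤ^n}` (with spacing `d = λl`). -/
def latticeEnum (n k m : ℕ) (d : ℝ)
    (X : Fin ((m + 1) ^ k) → EuclideanSpace ℝ (Fin n)) : Prop :=
  Function.Injective X ∧
  (∀ i, ∃ q : Fin n → ℤ,
      (∀ j : Fin n, (j : ℕ) < k → 0 ≤ q j ∧ q j ≤ (m : ℤ)) ∧
      (∀ j : Fin n, k ≤ (j : ℕ) → q j = 0) ∧
      (∀ j : Fin n, X i j = d * (q j : ℝ))) ∧
  (∀ q : Fin n → ℤ,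
      (∀ j : Fin n, (j : ℕ) < k → 0 ≤ q j ∧ q j ≤ (m : ℤ)) →
      (∀ j : Fin n, k ≤ (j : ℕ) → q j = 0) →
      ∃ i, ∀ j : Fin n, X i j = d * (q j : ℝ))

/-!
Measured from the nearest lattice point, a lattice point at integer offset `v` satisfies
`(1 + r) (1 + ‖v‖) ≤ 5 (1 + ρ)`, where `r` and `ρ` are the distances from `y` to the nearest point
and to the given one: `r` is at most both `ρ` and the spacing, and the spacing is at least `1`.
Raising this to the power `-θ` and summing over offsets bounds the sum by a multiple of
`∑ v : ℤ^k, (1 + ‖v‖) ^ (-θ)`, which converges because `θ > k`.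
-/

open Function Module

section IntegerVectors

variable {κ : Type*} [Fintype κ]

lemma norm_intCast_pi (v : κ → ℤ) : ‖fun t => (v t : ℝ)‖ = ‖v‖ := by
  have nnnorm_cast (t : κ) : ‖(v t : ℝ)‖₊ = ‖v t‖₊ := NNReal.eq (Int.norm_cast_real (v t))
  simp only [Pi.norm_def, nnnorm_cast]

lemma summable_norm_rpow_neg_int_pi {θ : ℝ} (hθ : Fintype.card κ < θ) :
    Summable fun v : κ → ℤ => ‖v‖ ^ (-θ) := by
  let b := Pi.basisFun ℝ κ
  let L := Submodule.span ℤ (Set.range b)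
  let toL : (κ → ℤ) ≃ₗ[ℤ] L := (b.restrictScalars ℤ).equivFun.symm
  have rank_L : finrank ℤ L = Fintype.card κ := by
    rw [ZLattice.rank ℝ L, finrank_fintype_fun_eq_card]
  have norm_toL (v : κ → ℤ) : ‖toL v‖ = ‖v‖ := by
    classical
    rw [← norm_intCast_pi v, Submodule.coe_norm]
    congr 1
    ext t
    simp [toL, b, Basis.equivFun_symm_apply, Pi.single_apply]
  have summable_L := ZLattice.summable_norm_rpow L (-θ) (by rw [rank_L]; linarith)
  exact (summable_L.comp_injective toL.injective).congr fun v => by rw [comp_apply, norm_toL]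

lemma summable_one_add_norm_rpow_neg {E : Type*} [NormedAddCommGroup E] {θ : ℝ} (hθ : 0 ≤ θ)
    (h : Summable fun v : E => ‖v‖ ^ (-θ)) : Summable fun v : E => (1 + ‖v‖) ^ (-θ) := by
  refine h.of_norm_bounded_eventually ((Set.finite_singleton 0).subset fun v hv => ?_)
  by_contra hv0
  apply hv
  have norm_pos : 0 < ‖v‖ := norm_pos_iff.mpr hv0
  rw [Set.mem_ofPred_eq, Real.norm_of_nonneg (by positivity)]
  exact Real.rpow_le_rpow_of_nonpos norm_pos (by linarith) (by linarith)

lemma summable_one_add_norm_rpow_neg_int_pi {θ : ℝ} (hθ : Fintype.card κ < θ) :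
    Summable fun v : κ → ℤ => (1 + ‖v‖) ^ (-θ) :=
  summable_one_add_norm_rpow_neg ((Nat.cast_nonneg _).trans hθ.le)
    (summable_norm_rpow_neg_int_pi hθ)

lemma one_le_tsum_one_add_norm_rpow_neg_int_pi {θ : ℝ} (hθ : Fintype.card κ < θ) :
    1 ≤ ∑' v : κ → ℤ, (1 + ‖v‖) ^ (-θ) := by
  simpa using (summable_one_add_norm_rpow_neg_int_pi hθ).le_tsum 0 fun v _ => by positivity

end IntegerVectors

lemma rpow_neg_le_of_mul_le_mul {a b c K θ : ℝ} (ha : 0 < a) (hb : 0 < b) (hK : 0 < K)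
    (hθ : 0 ≤ θ) (h : a * b ≤ K * c) : c ^ (-θ) ≤ K ^ θ * (a ^ (-θ) * b ^ (-θ)) := by
  have hc : 0 ≤ c := ((mul_pos_iff_of_pos_left hK).mp ((mul_pos ha hb).trans_le h)).le
  calc c ^ (-θ) = K ^ θ * (K * c) ^ (-θ) := by
        rw [Real.mul_rpow hK.le hc, ← mul_assoc, ← Real.rpow_add hK, add_neg_cancel,
          Real.rpow_zero, one_mul]
    _ ≤ K ^ θ * (a * b) ^ (-θ) := by
        gcongr ?_ * ?_
        exact Real.rpow_le_rpow_of_nonpos (mul_pos ha hb) h (neg_nonpos.mpr hθ)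
    _ = K ^ θ * (a ^ (-θ) * b ^ (-θ)) := by rw [Real.mul_rpow ha.le hb.le]

lemma one_add_mul_one_add_le {r ρ d g : ℝ} (hd : 1 ≤ d) (hg : 0 ≤ g) (hrd : r ≤ d)
    (hrρ : r ≤ ρ) (hρ : d * g ≤ r + ρ) : (1 + r) * (1 + g) ≤ 5 * (1 + ρ) := by
  have hrg : r * g ≤ d * g := by gcongr
  have hg_le : g ≤ d * g := le_mul_of_one_le_left hg hd
  linarith

theorem sum_one_add_dist_rpow_neg_le {ι κ E : Type*} [Fintype κ] [PseudoMetricSpace E] {θ d : ℝ}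
    (hθ : Fintype.card κ < θ) (hd : 1 ≤ d) {X : ι → E} {q : ι → κ → ℤ} (hq : Injective q)
    (hX : ∀ i j, d * ‖q i - q j‖ ≤ dist (X i) (X j)) {i : ι} {y : E}
    (hy : dist y (X i) ≤ d) (hmin : ∀ j, dist y (X i) ≤ dist y (X j)) (s : Finset ι) :
    ∑ j ∈ s, (1 + dist y (X j)) ^ (-θ) ≤
      5 ^ θ * (∑' v : κ → ℤ, (1 + ‖v‖) ^ (-θ)) * (1 + dist y (X i)) ^ (-θ) := by
  have hθ0 : 0 ≤ θ := (Nat.cast_nonneg _).trans hθ.le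
  have term_le (j : ι) : (1 + dist y (X j)) ^ (-θ) ≤
      5 ^ θ * ((1 + dist y (X i)) ^ (-θ) * (1 + ‖q j - q i‖) ^ (-θ)) := by
    have separation : d * ‖q j - q i‖ ≤ dist y (X i) + dist y (X j) :=
      (hX j i).trans ((dist_triangle_left _ _ y).trans_eq (add_comm _ _))
    exact rpow_neg_le_of_mul_le_mul (by positivity) (by positivity) (by norm_num) hθ0
      (one_add_mul_one_add_le hd (norm_nonneg _) hy (hmin j) separation)
  have sum_offsets_le : ∑ j ∈ s, (1 + ‖q j - q i‖) ^ (-θ) ≤ ∑' v : κ → ℤ, (1 + ‖v‖) ^ (-θ) := by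
    have summable := summable_one_add_norm_rpow_neg_int_pi hθ
    have nonneg (v : κ → ℤ) : 0 ≤ (1 + ‖v‖) ^ (-θ) := by positivity
    have offset_injective : Injective fun j => q j - q i := sub_left_injective.comp hq
    exact ((summable.comp_injective offset_injective).sum_le_tsum s fun _ _ => nonneg _).trans
      (tsum_comp_le_tsum_of_inj summable nonneg offset_injective)
  calc ∑ j ∈ s, (1 + dist y (X j)) ^ (-θ)
      ≤ ∑ j ∈ s, 5 ^ θ * ((1 + dist y (X i)) ^ (-θ) * (1 + ‖q j - q i‖) ^ (-θ)) :=
        Finset.sum_le_sum fun j _ => term_le j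
    _ = 5 ^ θ * (∑ j ∈ s, (1 + ‖q j - q i‖) ^ (-θ)) * (1 + dist y (X i)) ^ (-θ) := by
        rw [← Finset.mul_sum, ← Finset.mul_sum]; ring
    _ ≤ 5 ^ θ * (∑' v : κ → ℤ, (1 + ‖v‖) ^ (-θ)) * (1 + dist y (X i)) ^ (-θ) := by gcongr

lemma latticeEnum.exists_coords {n k m : ℕ} {d : ℝ}
    {X : Fin ((m + 1) ^ k) → EuclideanSpace ℝ (Fin n)} (hX : latticeEnum n k m d X)
    (hkn : k ≤ n) :
    ∃ q : Fin ((m + 1) ^ k) → Fin k → ℤ,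
      Injective q ∧ ∀ i j, |d| * ‖q i - q j‖ ≤ dist (X i) (X j) := by
  obtain ⟨X_injective, hq, -⟩ := hX
  choose q _ q_eq_zero X_eq using hq
  refine ⟨fun i t => q i (Fin.castLE hkn t), fun i j hij => X_injective ?_, fun i j => ?_⟩
  · ext t
    rw [X_eq, X_eq]
    by_cases ht : (t : ℕ) < k
    · have coord_eq : q i t = q j t := congrFun hij ⟨t, ht⟩
      rw [coord_eq]
    · rw [q_eq_zero i t (by omega), q_eq_zero j t (by omega)]
  · rw [← norm_intCast_pi, ← Real.norm_eq_abs, ← norm_smul, dist_eq_norm,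
      pi_norm_le_iff_of_nonneg (norm_nonneg _)]
    intro t
    have coord_le := PiLp.norm_apply_le (X i - X j) (Fin.castLE hkn t)
    simpa [X_eq, mul_sub] using coord_le

theorem stmt_3_general {k : ℕ} {θ : ℝ} (hθ : (k : ℝ) < θ) :
    ∃ C > (1 : ℝ), ∀ (n m : ℕ) (d : ℝ), k ≤ n → 1 ≤ d →
      ∀ X : Fin ((m + 1) ^ k) → EuclideanSpace ℝ (Fin n), latticeEnum n k m d X →
      ∀ i, ∀ y : EuclideanSpace ℝ (Fin n),
        ‖y - X i‖ ≤ d → (∀ j, ‖y - X i‖ ≤ ‖y - X j‖) →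
        (1 + ‖y - X i‖) ^ (-θ) ≤ (∑ j, (1 + ‖y - X j‖) ^ (-θ)) ∧
        (∑ j, (1 + ‖y - X j‖) ^ (-θ)) ≤ C * (1 + ‖y - X i‖) ^ (-θ) := by
  have hcard : (Fintype.card (Fin k) : ℝ) < θ := by rwa [Fintype.card_fin]
  have hθ0 : 0 < θ := (Nat.cast_nonneg k).trans_lt hθ
  refine ⟨5 ^ θ * ∑' v : Fin k → ℤ, (1 + ‖v‖) ^ (-θ),
    one_lt_mul_of_lt_of_le (Real.one_lt_rpow (by norm_num) hθ0)
      (one_le_tsum_one_add_norm_rpow_neg_int_pi hcard),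
    fun n m d hkn hd X hX i y hy hmin => ⟨?_, ?_⟩⟩
  · exact Finset.single_le_sum (f := fun j => (1 + ‖y - X j‖) ^ (-θ))
      (fun j _ => by positivity) (Finset.mem_univ i)
  · obtain ⟨q, q_injective, hq⟩ := hX.exists_coords hkn
    rw [abs_of_pos (by linarith)] at hq
    simp only [← dist_eq_norm y] at hy hmin ⊢
    exact sum_one_add_dist_rpow_neg_le hcard hd q_injective hq hy hmin Finset.univ

theorem stmt_3 (n k : ℕ) (s β θ : ℝ) (hn0 : 0 < n) (hs0 : 0 < s) (hs1 : s < 1)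
    (hn : 2 * s + 2 < (n : ℝ)) (hk1 : 1 ≤ k) (hk2 : (k : ℝ) < ((n : ℝ) - 2 * s) / 2)
    (hβ1 : (n : ℝ) - 2 * s < β) (hβ2 : β < (n : ℝ)) (hθ : (k : ℝ) < θ) :
    ∃ C > (1 : ℝ), ∀ m l : ℕ, 1 ≤ m → 1 ≤ l →
      ∀ lam : ℝ, lam = (l : ℝ) ^ (((n : ℝ) - 2 * s) / (β - (n : ℝ) + 2 * s)) →
      ∀ X : Fin ((m + 1) ^ k) → EuclideanSpace ℝ (Fin n), latticeEnum n k m (lam * l) X →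
      ∀ i, ∀ y : EuclideanSpace ℝ (Fin n),
        ‖y - X i‖ < lam * l → (∀ j, ‖y - X i‖ ≤ ‖y - X j‖) →
        (1 + ‖y - X i‖) ^ (-θ) ≤ (∑ j, (1 + ‖y - X j‖) ^ (-θ)) ∧
        (∑ j, (1 + ‖y - X j‖) ^ (-θ)) ≤ C * (1 + ‖y - X i‖) ^ (-θ) := by
  have hkn : k ≤ n := (Nat.cast_le (α := ℝ)).mp (by linarith)
  have exponent_nonneg : 0 ≤ (n - 2 * s) / (β - n + 2 * s) :=
    div_nonneg (by linarith) (by linarith)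
  obtain ⟨C, hC, bound⟩ := stmt_3_general hθ
  refine ⟨C, hC, fun m l _ hl lam hlam X hX i y hy => bound n m _ hkn ?_ X hX i y hy.le⟩
  have one_le_l : (1 : ℝ) ≤ l := Nat.one_le_cast.mpr hl
  have one_le_lam : 1 ≤ lam := hlam ▸ Real.one_le_rpow one_le_l exponent_nonneg
  exact one_le_mul_of_one_le_of_one_le one_le_lam one_le_l
end

section
/- For every pair of constants C' > 0 and c > 0 there exists l_0 such that for every integer l > l_0, every m, every choice of points P^i with |P^i − X^i| < 1/2 and Λ_i ∈ [C_1, C_2], and every function φ : ℝ^n → ℝ with ‖φ‖_* ≤ C' λ^{−((n+2s)/2 − τ)}, one has |φ(y)| ≤ c · W_m(y) for all y ∈ ∪_{h} (Ω_h ∩ B_h). -/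
open Filter Module
open scoped Pointwise

section LatticeSum

variable {E : Type*} [NormedAddCommGroup E]

/-- The constant by which, for points separated along a multiple of the lattice `L`, a sum of
decaying weights of exponent `p` exceeds its largest term. It is meaningful for `p > rank L`, where
the series converges; the origin contributes `0 ^ (-p) = 0` to it. -/
noncomputable def latticeSumConst (L : Submodule ℤ E) (p : ℝ) : ℝ :=
  1 + 4 ^ p * ∑' z : L, ‖z‖ ^ (-p)

lemma latticeSumConst_nonneg (L : Submodule ℤ E) (p : ℝ) : 0 ≤ latticeSumConst L p := by
  have : 0 ≤ ∑' z : L, ‖z‖ ^ (-p) := tsum_nonneg fun z => by positivity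
  unfold latticeSumConst
  positivity

variable [NormedSpace ℝ E]

lemma one_add_norm_sub_rpow_neg_le {p d : ℝ} (hp : 0 ≤ p) {x x₀ y z : E} (hz : z ≠ 0)
    (hxz : x - x₀ = d • z) (hnear : ‖y - x₀‖ ≤ ‖y - x‖) (hd : 1 + ‖y - x₀‖ ≤ 2 * d) :
    (1 + ‖y - x‖) ^ (-p) ≤ 4 ^ p * ‖z‖ ^ (-p) * (1 + ‖y - x₀‖) ^ (-p) := by
  have hzpos : 0 < ‖z‖ := norm_pos_iff.2 hz
  have hrpos : 0 < 1 + ‖y - x₀‖ := by positivity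
  have hsep : d * ‖z‖ ≤ 2 * ‖y - x‖ := calc
    d * ‖z‖ = ‖x - x₀‖ := by rw [hxz, norm_smul, Real.norm_of_nonneg (by linarith)]
    _ ≤ ‖x - y‖ + ‖y - x₀‖ := norm_sub_le_norm_sub_add_norm_sub x y x₀
    _ ≤ 2 * ‖y - x‖ := by rw [norm_sub_rev x y]; linarith
  have hlower : ‖z‖ * (1 + ‖y - x₀‖) / 4 ≤ 1 + ‖y - x‖ := by nlinarith
  calc (1 + ‖y - x‖) ^ (-p) ≤ (‖z‖ * (1 + ‖y - x₀‖) / 4) ^ (-p) :=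
        Real.rpow_le_rpow_of_nonpos (by positivity) hlower (by linarith)
    _ = 4 ^ p * ‖z‖ ^ (-p) * (1 + ‖y - x₀‖) ^ (-p) := by
        rw [Real.div_rpow (by positivity) (by norm_num), Real.mul_rpow hzpos.le hrpos.le,
          Real.rpow_neg (by norm_num : (0 : ℝ) ≤ 4)]
        field_simp

theorem sum_one_add_norm_sub_rpow_neg_le [FiniteDimensional ℝ E] {L : Submodule ℤ E}
    [DiscreteTopology L] {p d : ℝ} (hp : finrank ℤ L < p) {ι : Type*} [Fintype ι] {X : ι → E}
    (hinj : X.Injective) {h : ι} (hX : ∀ i, X i - X h ∈ d • (L : Set E)) {y : E}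
    (hnear : ∀ i, ‖y - X h‖ ≤ ‖y - X i‖) (hd : 1 + ‖y - X h‖ ≤ 2 * d) :
    ∑ i, (1 + ‖y - X i‖) ^ (-p) ≤ latticeSumConst L p * (1 + ‖y - X h‖) ^ (-p) := by
  classical
  have hp0 : 0 ≤ p := (Nat.cast_nonneg _).trans hp.le
  have hsummable : Summable fun z : L => ‖z‖ ^ (-p) :=
    ZLattice.summable_norm_rpow L (-p) (by linarith)
  have hcoord : ∀ i, ∃ z : L, d • (z : E) = X i - X h := fun i =>
    let ⟨z, hzL, hz⟩ := hX i
    ⟨⟨z, hzL⟩, hz⟩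
  choose z hz using hcoord
  have hzinj : z.Injective := fun i j hij =>
    hinj (sub_left_injective (by simpa only [hz] using congrArg (fun w : L => d • (w : E)) hij))
  have hz0 : ∀ i ∈ Finset.univ.erase h, (z i : E) ≠ 0 := fun i hi hzi =>
    (Finset.mem_erase.1 hi).1 (hinj (sub_eq_zero.1 (by rw [← hz i, hzi, smul_zero])))
  have htail : ∑ i ∈ Finset.univ.erase h, ‖z i‖ ^ (-p) ≤ ∑' w : L, ‖w‖ ^ (-p) := by
    rw [← Finset.sum_image (f := fun w : L => ‖w‖ ^ (-p)) hzinj.injOn]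
    exact hsummable.sum_le_tsum _ fun w _ => by positivity
  calc ∑ i, (1 + ‖y - X i‖) ^ (-p)
      = (1 + ‖y - X h‖) ^ (-p) + ∑ i ∈ Finset.univ.erase h, (1 + ‖y - X i‖) ^ (-p) :=
        (Finset.add_sum_erase _ _ (Finset.mem_univ h)).symm
    _ ≤ (1 + ‖y - X h‖) ^ (-p) +
          ∑ i ∈ Finset.univ.erase h, 4 ^ p * ‖z i‖ ^ (-p) * (1 + ‖y - X h‖) ^ (-p) := by
        gcongr with i hi
        exact one_add_norm_sub_rpow_neg_le hp0 (hz0 i hi) (hz i).symm (hnear i) hd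
    _ = (1 + 4 ^ p * ∑ i ∈ Finset.univ.erase h, ‖z i‖ ^ (-p)) * (1 + ‖y - X h‖) ^ (-p) := by
        rw [← Finset.sum_mul, ← Finset.mul_sum]
        ring
    _ ≤ latticeSumConst L p * (1 + ‖y - X h‖) ^ (-p) := by
        unfold latticeSumConst
        gcongr

end LatticeSum

section CoordinateLattice

/-- The lattice `ℤ^k × {0}` inside `ℝ^n`, spanned by the basis vectors of index less than `k` (all
of them if `n ≤ k`). -/
noncomputable def coordinateLattice (n k : ℕ) : Submodule ℤ (EuclideanSpace ℝ (Fin n)) :=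
  Submodule.span ℤ
    (({j : Fin n | (j : ℕ) < k} : Finset (Fin n)).image (EuclideanSpace.basisFun (Fin n) ℝ))

lemma finrank_coordinateLattice_le (n k : ℕ) : finrank ℤ (coordinateLattice n k) ≤ k :=
  calc finrank ℤ (coordinateLattice n k)
      ≤ (({j : Fin n | (j : ℕ) < k} : Finset (Fin n)).image
          (EuclideanSpace.basisFun (Fin n) ℝ)).card := finrank_span_finset_le_card _
    _ ≤ ({j : Fin n | (j : ℕ) < k} : Finset (Fin n)).card := Finset.card_image_le
    _ ≤ k := by simp [Fin.card_filter_val_lt]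

instance (n k : ℕ) : DiscreteTopology (coordinateLattice n k) := by
  let Z := Submodule.span ℤ (Set.range (EuclideanSpace.basisFun (Fin n) ℝ).toBasis)
  have hle : coordinateLattice n k ≤ Z := by
    refine Submodule.span_mono ?_
    rw [Finset.coe_image, OrthonormalBasis.coe_toBasis]
    exact Set.image_subset_range _ _
  exact DiscreteTopology.of_subset (inferInstanceAs (DiscreteTopology Z)) hle

lemma latticeEnum.sub_mem_smul_coordinateLattice {n k m : ℕ} {d : ℝ}
    {X : Fin ((m + 1) ^ k) → EuclideanSpace ℝ (Fin n)} (hX : latticeEnum n k m d X)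
    (i j : Fin ((m + 1) ^ k)) : X i - X j ∈ d • (coordinateLattice n k : Set _) := by
  obtain ⟨q, -, hq0, hq⟩ := hX.2.1 i
  obtain ⟨q', -, hq0', hq'⟩ := hX.2.1 j
  refine ⟨∑ t, (q t - q' t) • EuclideanSpace.basisFun (Fin n) ℝ t,
    Submodule.sum_mem _ fun t _ => ?_, ?_⟩
  · rcases lt_or_ge (t : ℕ) k with ht | ht
    · refine Submodule.smul_mem _ _ (Submodule.subset_span (Finset.mem_image_of_mem _ ?_))
      exact Finset.mem_filter.2 ⟨Finset.mem_univ t, ht⟩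
    · rw [hq0 t ht, hq0' t ht, sub_self, zero_smul]
      exact zero_mem _
  · ext t
    simp [hq, hq', Pi.single_apply, mul_sub]

end CoordinateLattice

section Bubble

variable {E : Type*} [SeminormedAddCommGroup E]

/-- The bubble `U_{ξ,Λ}(x) = C₀ (Λ / (1 + Λ² |x - ξ|²))^a`, the standard profile with
concentration `Λ` and centre `ξ`; the exponent `a` stands for `(n - 2s) / 2`. -/
noncomputable def bubble (C₀ a Λ : ℝ) (ξ x : E) : ℝ :=
  C₀ * (Λ / (1 + Λ ^ 2 * ‖x - ξ‖ ^ 2)) ^ a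

lemma bubble_nonneg {C₀ Λ : ℝ} (hC₀ : 0 ≤ C₀) (hΛ : 0 ≤ Λ) (a : ℝ) (ξ x : E) :
    0 ≤ bubble C₀ a Λ ξ x := by
  unfold bubble
  positivity

lemma le_bubble {C₀ C₁ C₂ a Λ r : ℝ} {ξ x : E} (hC₀ : 0 ≤ C₀) (ha : 0 ≤ a) (hC₁ : 0 < C₁)
    (hΛ : Λ ∈ Set.Icc C₁ C₂) (hr : 1 ≤ r) (hx : ‖x - ξ‖ ≤ r) :
    C₀ * (C₁ / (1 + C₂ ^ 2)) ^ a * r ^ (-(2 * a)) ≤ bubble C₀ a Λ ξ x := by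
  have hr0 : 0 < r := by linarith
  have hΛ0 : 0 < Λ := hC₁.trans_le hΛ.1
  have hscale : Λ ^ 2 * ‖x - ξ‖ ^ 2 ≤ C₂ ^ 2 * r ^ 2 := by gcongr; exact hΛ.2
  calc C₀ * (C₁ / (1 + C₂ ^ 2)) ^ a * r ^ (-(2 * a))
      = C₀ * (C₁ / ((1 + C₂ ^ 2) * r ^ 2)) ^ a := by
        rw [← div_div, Real.rpow_neg hr0.le, Real.rpow_mul hr0.le, Real.rpow_two, mul_assoc,
          ← div_eq_mul_inv, ← Real.div_rpow (by positivity) (by positivity)]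
    _ ≤ bubble C₀ a Λ ξ x := by
        unfold bubble
        gcongr
        · exact hΛ.1
        · nlinarith

lemma le_sum_bubble {C₀ C₁ C₂ a : ℝ} (hC₀ : 0 ≤ C₀) (ha : 0 ≤ a) (hC₁ : 0 < C₁) {ι : Type*}
    [Fintype ι] {P : ι → E} {Λ : ι → ℝ} (hΛ : ∀ i, Λ i ∈ Set.Icc C₁ C₂) {h : ι} {x₀ : E}
    (hP : ‖P h - x₀‖ ≤ 1) (y : E) :
    C₀ * (C₁ / (1 + C₂ ^ 2)) ^ a * (1 + ‖y - x₀‖) ^ (-(2 * a)) ≤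
      ∑ i, bubble C₀ a (Λ i) (P i) y := by
  have hdist : ‖y - P h‖ ≤ 1 + ‖y - x₀‖ := by
    linarith [norm_sub_le_norm_sub_add_norm_sub y x₀ (P h), norm_sub_rev x₀ (P h)]
  calc C₀ * (C₁ / (1 + C₂ ^ 2)) ^ a * (1 + ‖y - x₀‖) ^ (-(2 * a))
      ≤ bubble C₀ a (Λ h) (P h) y :=
        le_bubble hC₀ ha hC₁ (hΛ h) (le_add_of_nonneg_right (norm_nonneg _)) hdist
    _ ≤ ∑ i, bubble C₀ a (Λ i) (P i) y :=
        Finset.single_le_sum (fun i _ => bubble_nonneg hC₀ (hC₁.le.trans (hΛ i).1) a _ _)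
          (Finset.mem_univ h)

end Bubble

section Scaling

lemma rpow_le_rpow_of_eq_rpow_div {N s β l lam : ℝ} (hNβ : N - 2 * s < β) (hβN : β ≤ N)
    (hN : 0 ≤ N - 2 * s) (hl : 1 ≤ l) (hlam : lam = l ^ ((N - 2 * s) / (β - N + 2 * s))) :
    l ^ (N - 2 * s) ≤ lam ^ (2 * s) := by
  have hδ : 0 < β - N + 2 * s := by linarith
  rw [hlam, ← Real.rpow_mul (by linarith)]
  refine Real.rpow_le_rpow_of_exponent_le hl ?_
  rw [div_mul_eq_mul_div, le_div_iff₀ hδ]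
  gcongr
  linarith

lemma rpow_neg_mul_rpow_neg_le {a s τ l lam r : ℝ} (hτa : τ ≤ a) (hl : 0 < l) (hlam : 0 < lam)
    (hscale : l ^ (2 * a) ≤ lam ^ (2 * s)) (hr : 0 < r) (hr2 : r ≤ 2 * (lam * l)) :
    lam ^ (-(a + 2 * s - τ)) * r ^ (-(a + τ)) ≤
      2 ^ (a - τ) * l ^ (-(a + τ)) * r ^ (-(2 * a)) := by
  have hscale_neg : lam ^ (-(2 * s)) ≤ l ^ (-(2 * a)) := by
    rw [Real.rpow_neg hlam.le, Real.rpow_neg hl.le]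
    gcongr
  calc lam ^ (-(a + 2 * s - τ)) * r ^ (-(a + τ))
      = lam ^ (-(a + 2 * s - τ)) * r ^ (a - τ) * r ^ (-(2 * a)) := by
        rw [mul_assoc, ← Real.rpow_add hr]
        ring_nf
    _ ≤ lam ^ (-(a + 2 * s - τ)) * (2 * (lam * l)) ^ (a - τ) * r ^ (-(2 * a)) := by gcongr
    _ = 2 ^ (a - τ) * (lam ^ (-(2 * s)) * l ^ (a - τ)) * r ^ (-(2 * a)) := by
        rw [Real.mul_rpow zero_le_two (by positivity), Real.mul_rpow hlam.le hl.le,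
          show -(2 * s) = -(a + 2 * s - τ) + (a - τ) by ring, Real.rpow_add hlam]
        ring
    _ ≤ 2 ^ (a - τ) * (l ^ (-(2 * a)) * l ^ (a - τ)) * r ^ (-(2 * a)) := by gcongr
    _ = 2 ^ (a - τ) * l ^ (-(a + τ)) * r ^ (-(2 * a)) := by
        rw [← Real.rpow_add hl]
        ring_nf

lemma rpow_neg_mul_sum_one_add_norm_sub_rpow_neg_le {E : Type*} [NormedAddCommGroup E]
    [NormedSpace ℝ E] [FiniteDimensional ℝ E] {L : Submodule ℤ E} [DiscreteTopology L]
    {a s τ l lam : ℝ} (hL : finrank ℤ L < a + τ) (hτa : τ ≤ a) (hl : 1 ≤ l) (hlam : 1 ≤ lam)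
    (hscale : l ^ (2 * a) ≤ lam ^ (2 * s)) {ι : Type*} [Fintype ι] {X : ι → E}
    (hinj : X.Injective) {h : ι} (hX : ∀ i, X i - X h ∈ (lam * l) • (L : Set E)) {y : E}
    (hnear : ∀ i, ‖y - X h‖ ≤ ‖y - X i‖) (hball : ‖y - X h‖ ≤ lam * l) :
    lam ^ (-(a + 2 * s - τ)) * ∑ i, (1 + ‖y - X i‖) ^ (-(a + τ)) ≤
      latticeSumConst L (a + τ) * 2 ^ (a - τ) * l ^ (-(a + τ)) *
        (1 + ‖y - X h‖) ^ (-(2 * a)) := by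
  have hl0 : 0 < l := by linarith
  have hlam0 : 0 < lam := by linarith
  have hr : 1 + ‖y - X h‖ ≤ 2 * (lam * l) := by nlinarith
  have hK := latticeSumConst_nonneg L (a + τ)
  set K := latticeSumConst L (a + τ)
  set r := 1 + ‖y - X h‖
  calc lam ^ (-(a + 2 * s - τ)) * ∑ i, (1 + ‖y - X i‖) ^ (-(a + τ))
      ≤ lam ^ (-(a + 2 * s - τ)) * (K * r ^ (-(a + τ))) := by
        gcongr
        exact sum_one_add_norm_sub_rpow_neg_le hL hinj hX hnear hr
    _ = K * (lam ^ (-(a + 2 * s - τ)) * r ^ (-(a + τ))) := by ring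
    _ ≤ K * (2 ^ (a - τ) * l ^ (-(a + τ)) * r ^ (-(2 * a))) := by
        gcongr K * ?_
        exact rpow_neg_mul_rpow_neg_le hτa hl0 hlam0 hscale (by positivity) hr
    _ = K * 2 ^ (a - τ) * l ^ (-(a + τ)) * r ^ (-(2 * a)) := by ring

lemma eventually_mul_rpow_neg_le {p b : ℝ} (hp : 0 < p) (hb : 0 < b) (A : ℝ) :
    ∀ᶠ l : ℝ in atTop, A * l ^ (-p) ≤ b := by
  have hlim : Tendsto (fun l : ℝ => A * l ^ (-p)) atTop (nhds 0) := by
    simpa only [mul_zero] using (tendsto_rpow_neg_atTop hp).const_mul A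
  exact hlim.eventually (ge_mem_nhds hb)

end Scaling

/-- Here `n` is a free real parameter, unrelated to the dimension of `E`. -/
theorem stmt_6_general {E : Type*} [NormedAddCommGroup E] [NormedSpace ℝ E]
    [FiniteDimensional ℝ E] (L : Submodule ℤ E) [DiscreteTopology L]
    {n s β τ C₀ C₁ C₂ C' c : ℝ} (hβ1 : n - 2 * s < β) (hβ2 : β ≤ n)
    (hL : finrank ℤ L < (n - 2 * s) / 2 + τ) (hτ : τ ≤ (n - 2 * s) / 2)
    (hC₀ : 0 < C₀) (hC₁ : 0 < C₁) (hC' : 0 ≤ C') (hc : 0 < c) :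
    ∀ᶠ l : ℝ in atTop, ∀ (ι : Type*) [Fintype ι],
      ∀ lam : ℝ, lam = l ^ ((n - 2 * s) / (β - n + 2 * s)) →
      ∀ X : ι → E, X.Injective → (∀ i j, X i - X j ∈ (lam * l) • (L : Set E)) →
      ∀ P : ι → E, (∀ i, ‖P i - X i‖ ≤ 1) →
      ∀ Λ : ι → ℝ, (∀ i, Λ i ∈ Set.Icc C₁ C₂) →
      ∀ (φ : E → ℝ) (y : E),
      |φ y| ≤ C' * lam ^ (-((n + 2 * s) / 2 - τ)) *
        ∑ i, (1 + ‖y - X i‖) ^ (-((n - 2 * s) / 2 + τ)) →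
      ∀ h, (∀ j, ‖y - X h‖ ≤ ‖y - X j‖) → ‖y - X h‖ ≤ lam * l →
        |φ y| ≤ c * ∑ i, bubble C₀ ((n - 2 * s) / 2) (Λ i) (P i) y := by
  set a := (n - 2 * s) / 2 with ha
  have hna : n - 2 * s = 2 * a := by linarith
  have hexp : (n + 2 * s) / 2 - τ = a + 2 * s - τ := by linarith
  have hp : 0 < a + τ := (Nat.cast_nonneg _).trans_lt hL
  have ha0 : 0 ≤ a := by linarith
  set K := latticeSumConst L (a + τ)
  set D := C₀ * (C₁ / (1 + C₂ ^ 2)) ^ a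
  have hD : 0 < D := by positivity
  filter_upwards [eventually_ge_atTop 1,
    eventually_mul_rpow_neg_le hp (mul_pos hc hD) (C' * (K * 2 ^ (a - τ)))]
  intro l hl hsmall ι _ lam hlam X hinj hX P hP Λ hΛ φ y hφ h hnear hball
  have hlam1 : 1 ≤ lam := hlam ▸ Real.one_le_rpow hl (div_nonneg (by linarith) (by linarith))
  have hscale : l ^ (2 * a) ≤ lam ^ (2 * s) :=
    hna ▸ rpow_le_rpow_of_eq_rpow_div hβ1 hβ2 (by linarith) hl hlam
  set r := 1 + ‖y - X h‖
  calc |φ y| ≤ C' * (lam ^ (-(a + 2 * s - τ)) * ∑ i, (1 + ‖y - X i‖) ^ (-(a + τ))) := by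
        rwa [hexp, mul_assoc] at hφ
    _ ≤ C' * (K * 2 ^ (a - τ) * l ^ (-(a + τ)) * r ^ (-(2 * a))) := by
        gcongr C' * ?_
        exact rpow_neg_mul_sum_one_add_norm_sub_rpow_neg_le hL hτ hl hlam1 hscale hinj
          (fun i => hX i h) hnear hball
    _ = C' * (K * 2 ^ (a - τ)) * l ^ (-(a + τ)) * r ^ (-(2 * a)) := by ring
    _ ≤ c * D * r ^ (-(2 * a)) := by gcongr
    _ = c * (D * r ^ (-(2 * a))) := by ring
    _ ≤ c * ∑ i, bubble C₀ a (Λ i) (P i) y := by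
        gcongr
        exact le_sum_bubble hC₀.le ha0 hC₁ hΛ (hP h) y

theorem stmt_6 (n k : ℕ) (s β τ C₀ C₁ C₂ : ℝ) (hn0 : 0 < n) (hs0 : 0 < s) (hs1 : s < 1)
    (hn : 2 * s + 2 < (n : ℝ)) (hk1 : 1 ≤ k) (hk2 : (k : ℝ) < ((n : ℝ) - 2 * s) / 2)
    (hβ1 : (n : ℝ) - 2 * s < β) (hβ2 : β < (n : ℝ))
    (hτ1 : (k : ℝ) < τ) (hτ2 : τ < ((n : ℝ) - 2 * s) / 2)
    (hC₀ : 0 < C₀) (hC₁ : 0 < C₁) (hC₁₂ : C₁ < C₂)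
    (C' c : ℝ) (hC' : 0 < C') (hc : 0 < c) :
    ∃ l₀ : ℕ, ∀ l : ℕ, l₀ < l → ∀ m : ℕ, 1 ≤ m →
      ∀ lam : ℝ, lam = (l : ℝ) ^ (((n : ℝ) - 2 * s) / (β - (n : ℝ) + 2 * s)) →
      ∀ X : Fin ((m + 1) ^ k) → EuclideanSpace ℝ (Fin n), latticeEnum n k m (lam * l) X →
      ∀ P : Fin ((m + 1) ^ k) → EuclideanSpace ℝ (Fin n), (∀ i, ‖P i - X i‖ < 1 / 2) →
      ∀ Λ : Fin ((m + 1) ^ k) → ℝ, (∀ i, Λ i ∈ Set.Icc C₁ C₂) →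
      ∀ φ : EuclideanSpace ℝ (Fin n) → ℝ,
      (∀ y, |φ y| ≤ C' * lam ^ (-(((n : ℝ) + 2 * s) / 2 - τ)) *
          (min (⨅ i, ((1 + ‖y - X i‖) / lam) ^ (τ - s)) 1 *
            ∑ i, (1 + ‖y - X i‖) ^ (-(((n : ℝ) - 2 * s) / 2 + τ)))) →
      ∀ y : EuclideanSpace ℝ (Fin n),
        (∃ h, (∀ j, ‖y - X h‖ ≤ ‖y - X j‖) ∧ ‖y - X h‖ < lam * l) →
        |φ y| ≤ c * ∑ i, C₀ * (Λ i / (1 + Λ i ^ 2 * ‖y - P i‖ ^ 2)) ^ (((n : ℝ) - 2 * s) / 2) := by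
  have hL : (finrank ℤ (coordinateLattice n k) : ℝ) < ((n : ℝ) - 2 * s) / 2 + τ :=
    (Nat.cast_le.2 (finrank_coordinateLattice_le n k)).trans_lt (by linarith)
  obtain ⟨l₀, hl₀⟩ := eventually_atTop.1 (tendsto_natCast_atTop_atTop.eventually
    (stmt_6_general (coordinateLattice n k) hβ1 hβ2.le hL hτ2.le hC₀ hC₁ hC'.le hc))
  refine ⟨l₀, fun l hl m _ lam hlam X hX P hP Λ hΛ φ hφ y ⟨h, hnear, hball⟩ => ?_⟩
  refine hl₀ l hl.le _ lam hlam X hX.1 hX.sub_mem_smul_coordinateLattice P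
    (fun i => (hP i).le.trans (by norm_num)) Λ hΛ φ y ((hφ y).trans ?_) h hnear hball.le
  have hlam0 : 0 ≤ lam := hlam ▸ Real.rpow_nonneg l.cast_nonneg _
  gcongr
  exact mul_le_of_le_one_left (Finset.sum_nonneg fun i _ => by positivity) (min_le_right _ _)
end

section
/- There exist a small constant θ > 0 and a constant C > 0, both depending only on n, s, k, τ (in particular independent of m, l and of the choice of P^i, Λ_i), such that for all x ∈ ℝ^n: ∫_{ℝ^n} |x−y|^{−(n−2s)} W_m(y)^{4s/(n−2s)} γ(y) Σ_{h} (1+|y−X^h|)^{−((n−2s)/2+τ)} dy ≤ C γ(x) Σ_{h} (1+|x−X^h|)^{−((n−2s)/2+τ+θ)} + C (λl)^{−4sk/(n−2s)} γ(x) Σ_{h} (1+|x−X^h|)^{−((n−2s)/2+τ)}, where all sums run over h = 1,…,(m+1)^k. -/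
/-!
Write `N = n - 2s` and `S_b(y) = ∑ h, (1 + ‖y - X h‖) ^ (-b)`. The bubbles have centres close to the
`X h` and comparable scales, so `W ≲ S_N`. Let `r` be the distance from `y` to the nearest point
and `d = λl` the spacing. If `r ≤ d`, then `S_b` is comparable to its nearest term and
`S_N ^ (4s/N) ≲ (1 + r) ^ (-4s)`; if `r ≥ d`, counting the points in balls by packing gives
`S_N ^ (4s/N) ≲ d ^ (-4sk/N) (1 + r) ^ (-4s (N - k) / N)`. In both regimes more than `2s` powers of
`1 + r` are available, because `k < N / 2`. Of these, `2s + θ` are spent on the weight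
`(1 + dist(y, V)) ^ (-(2s + θ))`, where `V` is the subspace spanned by the lattice. With this weight
the measure of a ball of radius `ρ` is `O(ρ ^ (N - θ))`, and this integrability at infinity makes
the kernel `‖x - y‖ ^ (-N)` reproduce each profile `(1 + ‖y - X h‖) ^ (-b)` with `b < N - θ`.

The product `γ S_b` is at most both `S_b` and `λ ^ (-κ) S_{b-κ}`, where `κ = τ - s`. Each of these
is reproduced by the potential, and their minimum is in turn `≲ γ S_b`.
-/

open MeasureTheory Set Module
open scoped ENNReal

section LayerCake

variable {Ω : Type*} [MeasurableSpace Ω] {μ : Measure Ω} {g : Ω → ℝ} {M α b R : ℝ}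

lemma lt_rpow_neg_iff {u t b : ℝ} (hu : 0 < u) (ht : 0 < t) (hb : 0 < b) :
    t < u ^ (-b) ↔ u < t ^ (-b⁻¹) := by
  rw [← inv_neg, Real.lt_rpow_inv_iff_of_neg hu ht (neg_lt_zero.2 hb)]

lemma lintegral_rpow_neg_eq_lintegral_measure (hg : Measurable g) (hg0 : ∀ y, 0 ≤ g y)
    (hb : 0 < b) :
    ∫⁻ y, ENNReal.ofReal (g y ^ (-b)) ∂μ =
      ∫⁻ t in Ioi (0 : ℝ), μ {y | 0 < g y ∧ g y < t ^ (-b⁻¹)} := by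
  rw [lintegral_eq_lintegral_meas_lt μ (.of_forall fun y => Real.rpow_nonneg (hg0 y) _)
    (hg.pow_const _).aemeasurable]
  refine setLIntegral_congr_fun measurableSet_Ioi fun t ht => ?_
  congr 1
  ext y
  rcases (hg0 y).eq_or_lt with h | h
  · simp [← h, Real.zero_rpow (neg_ne_zero.2 hb.ne'), (mem_Ioi.1 ht).le]
  · simp [h, lt_rpow_neg_iff h ht hb]

lemma lintegral_Ioi_const_mul_rpow {p T : ℝ} (hM : 0 ≤ M) (hp : p < -1) (hT : 0 < T) :
    ∫⁻ t in Ioi T, ENNReal.ofReal (M * t ^ p) =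
      ENNReal.ofReal (M * (-T ^ (p + 1) / (p + 1))) := by
  rw [← ofReal_integral_eq_lintegral_ofReal ((integrableOn_Ioi_rpow_of_lt hp hT).const_mul M)
      ((ae_restrict_mem measurableSet_Ioi).mono fun t (ht : _ < t) =>
        mul_nonneg hM (Real.rpow_nonneg (hT.trans ht).le _)),
    integral_const_mul, integral_Ioi_rpow_of_lt hp hT]

lemma lintegral_Ioc_const_mul_rpow {p T : ℝ} (hM : 0 ≤ M) (hp : -1 < p) (hT : 0 ≤ T) :
    ∫⁻ t in Ioc 0 T, ENNReal.ofReal (M * t ^ p) =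
      ENNReal.ofReal (M * (T ^ (p + 1) / (p + 1))) := by
  rw [← ofReal_integral_eq_lintegral_ofReal
      ((intervalIntegral.intervalIntegrable_rpow' hp).1.const_mul M)
      ((ae_restrict_mem measurableSet_Ioc).mono fun t ht =>
        mul_nonneg hM (Real.rpow_nonneg ht.1.le _)),
    integral_const_mul, ← intervalIntegral.integral_of_le hT, integral_rpow (.inl hp),
    Real.zero_rpow (by linarith), sub_zero]

lemma lintegral_rpow_neg_sublevel_le (hg : Measurable g) (hg0 : ∀ y, 0 ≤ g y) (hM : 0 ≤ M)
    (hb : 0 < b) (hbα : b < α) (hR : 0 < R)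
    (hμ : ∀ ρ, 0 < ρ → ρ ≤ R → μ {y | g y < ρ} ≤ ENNReal.ofReal (M * ρ ^ α)) :
    ∫⁻ y in {y | g y < R}, ENNReal.ofReal (g y ^ (-b)) ∂μ ≤
      ENNReal.ofReal (α / (α - b) * M * R ^ (α - b)) := by
  have hT : 0 < R ^ (-b) := Real.rpow_pos_of_pos hR _
  have hαb : -(α / b) < -1 := neg_lt_neg ((one_lt_div hb).2 hbα)
  have low : ∀ t ∈ Ioc 0 (R ^ (-b)),
      μ.restrict {y | g y < R} {y | 0 < g y ∧ g y < t ^ (-b⁻¹)} ≤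
        ENNReal.ofReal (M * R ^ α) := fun t ht =>
    (measure_mono (subset_univ _)).trans (by simpa using hμ R hR le_rfl)
  have high : ∀ t ∈ Ioi (R ^ (-b)),
      μ.restrict {y | g y < R} {y | 0 < g y ∧ g y < t ^ (-b⁻¹)} ≤
        ENNReal.ofReal (M * t ^ (-(α / b))) := fun t (ht : _ < t) => by
    have ht0 : 0 < t := hT.trans ht
    have hρR : t ^ (-b⁻¹) ≤ R := by
      rw [← inv_neg, Real.rpow_inv_le_iff_of_neg ht0 hR (neg_lt_zero.2 hb)]
      exact ht.le
    refine (Measure.restrict_le_self _).trans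
      ((measure_mono fun y hy => hy.2).trans ((hμ _ (by positivity) hρR).trans_eq ?_))
    rw [← Real.rpow_mul ht0.le]
    ring_nf
  rw [lintegral_rpow_neg_eq_lintegral_measure hg hg0 hb, ← Ioc_union_Ioi_eq_Ioi hT.le,
    lintegral_union measurableSet_Ioi (Ioc_disjoint_Ioi le_rfl)]
  refine (add_le_add (setLIntegral_mono measurable_const low)
    (setLIntegral_mono (by fun_prop) high)).trans_eq ?_
  rw [setLIntegral_const, Real.volume_Ioc, lintegral_Ioi_const_mul_rpow hM hαb hT,
    ← ENNReal.ofReal_mul (by positivity), ← ENNReal.ofReal_add (by positivity)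
      (mul_nonneg hM (div_nonneg_of_nonpos (neg_nonpos.2 (by positivity)) (by linarith)))]
  have hRα : R ^ α * R ^ (-b) = R ^ (α - b) := by rw [← Real.rpow_add hR]; ring_nf
  have hRb : (R ^ (-b)) ^ (-(α / b) + 1) = R ^ (α - b) := by
    rw [← Real.rpow_mul hR.le]; congr 1; field_simp; ring
  rw [hRb, sub_zero, mul_assoc, hRα]
  congr 1
  have : α - b ≠ 0 := by linarith
  have : -α + b ≠ 0 := by linarith
  have : -(α / b) + 1 ≠ 0 := by linarith
  field_simp
  ring

lemma lintegral_rpow_neg_superlevel_le (hg : Measurable g) (hg0 : ∀ y, 0 ≤ g y) (hM : 0 ≤ M)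
    (hb : 0 < b) (hαb : α < b) (hR : 0 < R)
    (hμ : ∀ ρ, R ≤ ρ → μ {y | g y < ρ} ≤ ENNReal.ofReal (M * ρ ^ α)) :
    ∫⁻ y in {y | R ≤ g y}, ENNReal.ofReal (g y ^ (-b)) ∂μ ≤
      ENNReal.ofReal (b / (b - α) * M * R ^ (α - b)) := by
  have hT : 0 < R ^ (-b) := Real.rpow_pos_of_pos hR _
  have hα : -1 < -(α / b) := neg_lt_neg ((div_lt_one hb).2 hαb)
  have low : ∀ t ∈ Ioc 0 (R ^ (-b)),
      μ.restrict {y | R ≤ g y} {y | 0 < g y ∧ g y < t ^ (-b⁻¹)} ≤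
        ENNReal.ofReal (M * t ^ (-(α / b))) := fun t ht => by
    have hρR : R ≤ t ^ (-b⁻¹) := by
      rw [← inv_neg, Real.le_rpow_inv_iff_of_neg hR ht.1 (neg_lt_zero.2 hb)]
      exact ht.2
    refine (Measure.restrict_le_self _).trans
      ((measure_mono fun y hy => hy.2).trans ((hμ _ hρR).trans_eq ?_))
    rw [← Real.rpow_mul ht.1.le]
    ring_nf
  have high : ∀ t ∈ Ioi (R ^ (-b)),
      μ.restrict {y | R ≤ g y} {y | 0 < g y ∧ g y < t ^ (-b⁻¹)} = 0 := fun t (ht : _ < t) => by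
    rw [Measure.restrict_apply' (measurableSet_le measurable_const hg),
      measure_eq_zero_iff_ae_notMem]
    refine .of_forall fun y ⟨⟨hy0, hyt⟩, (hyR : R ≤ g y)⟩ => ?_
    rw [← lt_rpow_neg_iff hy0 (hT.trans ht) hb] at hyt
    exact (ht.trans hyt).not_ge (Real.rpow_le_rpow_of_nonpos hR hyR (by linarith))
  rw [lintegral_rpow_neg_eq_lintegral_measure hg hg0 hb, ← Ioc_union_Ioi_eq_Ioi hT.le,
    lintegral_union measurableSet_Ioi (Ioc_disjoint_Ioi le_rfl),
    setLIntegral_congr_fun measurableSet_Ioi high, lintegral_zero, add_zero]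
  refine (setLIntegral_mono (by fun_prop) low).trans_eq ?_
  rw [lintegral_Ioc_const_mul_rpow hM hα hT.le, ← Real.rpow_mul hR.le]
  have hexp : -b * (-(α / b) + 1) = α - b := by field_simp; ring
  rw [hexp]
  congr 1
  have : b - α ≠ 0 := by linarith
  have : -(α / b) + 1 ≠ 0 := by linarith
  have : -α + b ≠ 0 := by linarith
  field_simp
  ring

lemma setLIntegral_rpow_neg_le {B : Set Ω} (hg : Measurable g) (hg0 : ∀ y, 0 ≤ g y) (hM : 0 ≤ M)
    (hb : 0 < b) (hbα : b < α) (hR : 0 < R) (hB : μ B ≤ ENNReal.ofReal (M * R ^ α))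
    (hμ : ∀ ρ, 0 < ρ → ρ ≤ R → μ ({y | g y < ρ} ∩ B) ≤ ENNReal.ofReal (M * ρ ^ α)) :
    ∫⁻ y in B, ENNReal.ofReal (g y ^ (-b)) ∂μ ≤
      ENNReal.ofReal ((α / (α - b) + 1) * M * R ^ (α - b)) := by
  have hgR : MeasurableSet {y | g y < R} := measurableSet_lt hg measurable_const
  have large : ∫⁻ y in {y | g y < R}ᶜ, ENNReal.ofReal (g y ^ (-b)) ∂(μ.restrict B) ≤
      ENNReal.ofReal (M * R ^ (α - b)) := by
    calc _ ≤ ∫⁻ _ in {y | g y < R}ᶜ, ENNReal.ofReal (R ^ (-b)) ∂(μ.restrict B) :=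
          setLIntegral_mono measurable_const fun y hy => ENNReal.ofReal_le_ofReal
            (Real.rpow_le_rpow_of_nonpos hR (not_lt.1 hy) (by linarith))
      _ ≤ ENNReal.ofReal (R ^ (-b)) * ENNReal.ofReal (M * R ^ α) := by
          rw [setLIntegral_const]
          gcongr
          exact (measure_mono (subset_univ _)).trans (by simpa using hB)
      _ = _ := by
          rw [← ENNReal.ofReal_mul (by positivity), sub_eq_add_neg, Real.rpow_add hR]
          ring_nf
  rw [← lintegral_add_compl _ hgR]
  refine (add_le_add (lintegral_rpow_neg_sublevel_le hg hg0 hM hb hbα hR fun ρ h0 hρ => ?_)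
    large).trans_eq ?_
  · rw [Measure.restrict_apply (measurableSet_lt hg measurable_const)]
    exact hμ ρ h0 hρ
  · have : 0 ≤ α / (α - b) := div_nonneg (hb.trans hbα).le (by linarith)
    rw [← ENNReal.ofReal_add (by positivity) (by positivity)]
    ring_nf

lemma lintegral_rpow_neg_le {ν : ℝ} (hg : Measurable g) (hg0 : ∀ y, 0 ≤ g y) (hM : 0 ≤ M)
    (hb : 0 < b) (hαb : α < b) (hbν : b < ν)
    (hμν : ∀ ρ, 0 < ρ → μ {y | g y < ρ} ≤ ENNReal.ofReal (M * ρ ^ ν))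
    (hμα : ∀ ρ, 0 < ρ → μ {y | g y < ρ} ≤ ENNReal.ofReal (M * ρ ^ α)) :
    ∫⁻ y, ENNReal.ofReal (g y ^ (-b)) ∂μ ≤
      ENNReal.ofReal ((ν / (ν - b) + b / (b - α)) * M) := by
  have : 0 ≤ ν / (ν - b) := div_nonneg (hb.trans hbν).le (by linarith)
  have : 0 ≤ b / (b - α) := div_nonneg hb.le (by linarith)
  have hcompl : {y | g y < 1}ᶜ = {y | 1 ≤ g y} := by ext; simp
  rw [← lintegral_add_compl _ (measurableSet_lt hg (measurable_const (a := (1 : ℝ)))), hcompl]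
  refine (add_le_add
    (lintegral_rpow_neg_sublevel_le hg hg0 hM hb hbν one_pos fun ρ h _ => hμν ρ h)
    (lintegral_rpow_neg_superlevel_le hg hg0 hM hb hαb one_pos fun ρ h =>
      hμα ρ (one_pos.trans_le h))).trans_eq ?_
  rw [← ENNReal.ofReal_add (by positivity) (by positivity), Real.one_rpow, Real.one_rpow]
  ring_nf

end LayerCake

section RieszPotential

variable {E : Type*} [SeminormedAddCommGroup E] [MeasurableSpace E]

/-- The Riesz potential `∫ ‖x - y‖ ^ (-N) f(y) dμ(y)` of a nonnegative function `f` with respect to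
a measure `μ`. It is an extended nonnegative number, so that no integrability is presupposed. -/
noncomputable def rieszPotential (μ : Measure E) (N : ℝ) (f : E → ℝ) (x : E) : ℝ≥0∞ :=
  ∫⁻ y, ENNReal.ofReal (‖x - y‖ ^ (-N) * f y) ∂μ

/-- Upper Ahlfors regularity: balls of radius `ρ` have `μ`-measure at most `M ρ ^ α`. -/
def IsUpperRegular (μ : Measure E) (α M : ℝ) : Prop :=
  ∀ z ρ, 0 < ρ → μ (Metric.ball z ρ) ≤ ENNReal.ofReal (M * ρ ^ α)

variable {μ : Measure E} {N α b ν M : ℝ}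

lemma rieszPotential_mono {f g : E → ℝ} (h : ∀ y, f y ≤ g y) (x : E) :
    rieszPotential μ N f x ≤ rieszPotential μ N g x :=
  lintegral_mono fun y => ENNReal.ofReal_le_ofReal (by gcongr; exact h y)

lemma rieszPotential_const_mul {c : ℝ} (hc : 0 ≤ c) (f : E → ℝ) (x : E) :
    rieszPotential μ N (fun y => c * f y) x = ENNReal.ofReal c * rieszPotential μ N f x := by
  simp only [rieszPotential, mul_left_comm, ENNReal.ofReal_mul hc]
  exact lintegral_const_mul' _ _ ENNReal.ofReal_ne_top

lemma rpow_neg_mul_rpow_neg_le_s7 {u v D : ℝ} (hu : 0 ≤ u) (hv : 0 ≤ v) (hD : 0 < D)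
    (hN : 0 ≤ N) (hb : 0 ≤ b) (huv : D ≤ u + v) :
    u ^ (-N) * v ^ (-b) ≤ (D / 2) ^ (-b) * u ^ (-N) +
      (D / 2) ^ (-N) * {t : ℝ | t < D / 2}.indicator (· ^ (-b)) v := by
  rcases lt_or_ge v (D / 2) with hvD | hvD
  · rw [indicator_of_mem (by exact hvD)]
    have : u ^ (-N) ≤ (D / 2) ^ (-N) :=
      Real.rpow_le_rpow_of_nonpos (half_pos hD) (by linarith) (by linarith)
    exact (mul_le_mul_of_nonneg_right this (by positivity)).trans
      (le_add_of_nonneg_left (by positivity))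
  · rw [indicator_of_notMem (by exact hvD.not_gt), mul_zero, add_zero, mul_comm]
    gcongr ?_ * _
    exact Real.rpow_le_rpow_of_nonpos (half_pos hD) hvD (by linarith)

lemma half_rpow_neg_mul_add_le {A B D : ℝ} (hαN : α ≤ N) (hD : 1 ≤ D) (hB : 0 ≤ B) :
    (D / 2) ^ (-b) * A + (D / 2) ^ (-N) * (B * (D / 2) ^ (α - b)) ≤
      2 ^ b * (A + 2 ^ (N - α) * B) * D ^ (-b) := by
  have hD0 : 0 < D / 2 := by linarith
  have combine : (D / 2) ^ (-N) * (D / 2) ^ (α - b) = (D / 2) ^ (-b) * (D / 2) ^ (α - N) := by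
    rw [← Real.rpow_add hD0, ← Real.rpow_add hD0]; ring_nf
  have scale : (D / 2) ^ (-b) = 2 ^ b * D ^ (-b) := by
    rw [Real.div_rpow (by linarith) two_pos.le, Real.rpow_neg two_pos.le]
    field_simp
  have decay : (D / 2) ^ (α - N) ≤ 2 ^ (N - α) := by
    rw [← neg_sub N α, Real.rpow_neg hD0.le, ← Real.inv_rpow hD0.le, inv_div]
    exact Real.rpow_le_rpow (by positivity) (by rw [div_le_iff₀] <;> linarith) (by linarith)
  calc (D / 2) ^ (-b) * A + (D / 2) ^ (-N) * (B * (D / 2) ^ (α - b))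
      = 2 ^ b * (A + (D / 2) ^ (α - N) * B) * D ^ (-b) := by
        linear_combination B * combine + (A + (D / 2) ^ (α - N) * B) * scale
    _ ≤ 2 ^ b * (A + 2 ^ (N - α) * B) * D ^ (-b) := by gcongr

variable [OpensMeasurableSpace E]

lemma rieszPotential_add_le {f : E → ℝ} (hf : Measurable f) (g : E → ℝ) (x : E) :
    rieszPotential μ N (fun y => f y + g y) x ≤
      rieszPotential μ N f x + rieszPotential μ N g x := by
  have hkernel : Measurable fun y : E => ‖x - y‖ := Continuous.measurable (by fun_prop)
  simp only [rieszPotential]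
  rw [← lintegral_add_left (by fun_prop)]
  exact lintegral_mono fun y => by
    rw [mul_add]
    exact ENNReal.ofReal_add_le

lemma integrable_of_rieszPotential_ne_top {f : E → ℝ} (hf : Measurable f) (hf0 : ∀ y, 0 ≤ f y)
    {x : E} (h : rieszPotential μ N f x ≠ ∞) :
    Integrable (fun y => ‖x - y‖ ^ (-N) * f y) μ := by
  have hkernel : Measurable fun y : E => ‖x - y‖ := Continuous.measurable (by fun_prop)
  refine (lintegral_ofReal_ne_top_iff_integrable (by fun_prop) (.of_forall fun y => ?_)).1 h
  exact mul_nonneg (by positivity) (hf0 y)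

lemma integral_le_of_rieszPotential_le {f : E → ℝ} (hf : Measurable f) (hf0 : ∀ y, 0 ≤ f y)
    {x : E} {B : ℝ} (hB : 0 ≤ B) (h : rieszPotential μ N f x ≤ ENNReal.ofReal B) :
    ∫ y, ‖x - y‖ ^ (-N) * f y ∂μ ≤ B := by
  have hkernel : Measurable fun y : E => ‖x - y‖ := Continuous.measurable (by fun_prop)
  rw [integral_eq_lintegral_of_nonneg_ae (.of_forall fun y => mul_nonneg (by positivity) (hf0 y))
    (by fun_prop)]
  exact ENNReal.toReal_le_of_le_ofReal hB h

lemma rieszPotential_one_add_norm_rpow_neg_le (hN : 0 ≤ N) (hb : 0 ≤ b) (x z : E) :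
    rieszPotential μ N (fun y => (1 + ‖y - z‖) ^ (-b)) x ≤
      ENNReal.ofReal (((1 + ‖x - z‖) / 2) ^ (-b)) * ∫⁻ y, ENNReal.ofReal (‖x - y‖ ^ (-N)) ∂μ +
      ENNReal.ofReal (((1 + ‖x - z‖) / 2) ^ (-N)) *
        ∫⁻ y in {y | 1 + ‖y - z‖ < (1 + ‖x - z‖) / 2},
          ENNReal.ofReal ((1 + ‖y - z‖) ^ (-b)) ∂μ := by
  have hmeas : Measurable fun y : E => 1 + ‖y - z‖ := Continuous.measurable (by fun_prop)
  have hmeas' : Measurable fun y : E => ‖x - y‖ := Continuous.measurable (by fun_prop)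
  rw [← lintegral_indicator (measurableSet_lt hmeas measurable_const),
    ← lintegral_const_mul' _ _ ENNReal.ofReal_ne_top,
    ← lintegral_const_mul' _ _ ENNReal.ofReal_ne_top, ← lintegral_add_left (by fun_prop)]
  refine lintegral_mono fun y => (ENNReal.ofReal_le_ofReal (rpow_neg_mul_rpow_neg_le_s7
    (D := 1 + ‖x - z‖) (norm_nonneg _) (by positivity) (by positivity) hN hb ?_)).trans ?_
  · linarith [norm_sub_le_norm_sub_add_norm_sub x y z]
  · refine ENNReal.ofReal_add_le.trans_eq ?_
    rw [ENNReal.ofReal_mul (by positivity), ENNReal.ofReal_mul (by positivity)]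
    by_cases h : 1 + ‖y - z‖ < (1 + ‖x - z‖) / 2 <;> simp [indicator, h]

lemma exists_rieszPotential_one_add_norm_rpow_neg_le (hM : 0 ≤ M) (hb : 0 < b) (hbα : b < α)
    (hαN : α < N) (hNν : N < ν) (hμν : IsUpperRegular μ ν M) (hμα : IsUpperRegular μ α M) :
    ∃ C > 0, ∀ x z : E, rieszPotential μ N (fun y => (1 + ‖y - z‖) ^ (-b)) x ≤
      ENNReal.ofReal (C * (1 + ‖x - z‖) ^ (-b)) := by
  have hN : 0 < N := by linarith
  set A := (ν / (ν - N) + N / (N - α)) * M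
  have hA : 0 ≤ A := mul_nonneg (add_nonneg (div_nonneg (by linarith) (by linarith))
    (div_nonneg hN.le (by linarith))) hM
  set B := α / (α - b) * M
  have hB : 0 ≤ B := mul_nonneg (div_nonneg (by linarith) (by linarith)) hM
  refine ⟨2 ^ b * (A + 2 ^ (N - α) * B) + 1, by positivity, fun x z => ?_⟩
  set D := 1 + ‖x - z‖
  have hD1 : 1 ≤ D := le_add_of_nonneg_right (norm_nonneg _)
  have hD : 0 < D / 2 := by linarith
  have kernel : ∫⁻ y, ENNReal.ofReal (‖x - y‖ ^ (-N)) ∂μ ≤ ENNReal.ofReal A := by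
    have hball : ∀ ρ, {y | ‖x - y‖ < ρ} = Metric.ball x ρ := fun ρ => by
      ext; simp [dist_eq_norm_sub']
    exact lintegral_rpow_neg_le (Continuous.measurable (by fun_prop)) (fun _ => norm_nonneg _)
      hM hN hαN hNν (fun ρ h => hball ρ ▸ hμν x ρ h) (fun ρ h => hball ρ ▸ hμα x ρ h)
  have near : ∫⁻ y in {y | 1 + ‖y - z‖ < D / 2}, ENNReal.ofReal ((1 + ‖y - z‖) ^ (-b)) ∂μ ≤
      ENNReal.ofReal (B * (D / 2) ^ (α - b)) :=
    lintegral_rpow_neg_sublevel_le (Continuous.measurable (by fun_prop))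
      (fun _ => by positivity) hM hb hbα hD fun ρ h _ =>
        (measure_mono fun y (hy : _ < ρ) => by
          rw [mem_ball_iff_norm]; linarith).trans (hμα z ρ h)
  refine (rieszPotential_one_add_norm_rpow_neg_le hN.le hb.le x z).trans
    ((add_le_add (mul_le_mul_right kernel _) (mul_le_mul_right near _)).trans ?_)
  rw [← ENNReal.ofReal_mul (by positivity), ← ENNReal.ofReal_mul (by positivity),
    ← ENNReal.ofReal_add (by positivity) (by positivity)]
  refine ENNReal.ofReal_le_ofReal
    ((half_rpow_neg_mul_add_le hαN.le hD1 hB).trans ?_)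
  gcongr
  exact le_add_of_nonneg_right zero_le_one

end RieszPotential

section OrthogonalSlab

variable {E : Type*} [NormedAddCommGroup E] [InnerProductSpace ℝ E] [FiniteDimensional ℝ E]
  [MeasurableSpace E] [BorelSpace E]

lemma volume_slab_inter_ball_le (K : Submodule ℝ E) (z : E) (w : K) {ρ t : ℝ} (hρ : 0 < ρ)
    (ht : 0 < t) :
    volume ({y | ‖K.orthogonalProjectionOnto y - w‖ < t} ∩ Metric.ball z ρ) ≤
      ENNReal.ofReal (volume.real (Metric.ball (0 : K) 1) *
        volume.real (Metric.ball (0 : Kᗮ) 1) * ρ ^ finrank ℝ Kᗮ * t ^ finrank ℝ K) := by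
  have hK : MeasurePreserving (K.measurableEquivProd (0 : E)) := by
    simpa only [InnerProductSpace.euclideanHausdorffMeasure_eq_volume] using
      K.measurePreserving_measurableEquivProd (0 : E)
  calc _ ≤ volume (K.measurableEquivProd (0 : E) ⁻¹'
        Metric.ball w t ×ˢ Metric.ball (Kᗮ.orthogonalProjectionOnto z) ρ) := by
        refine measure_mono fun y ⟨hyt, hyz⟩ => ?_
        rw [mem_ball_iff_norm] at hyz
        rw [mem_preimage, K.measurableEquivProd_apply, vsub_eq_sub, sub_zero]
        refine ⟨mem_ball_iff_norm.2 hyt, ?_⟩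
        rw [mem_ball_iff_norm, ← map_sub]
        exact (Kᗮ.norm_orthogonalProjectionOnto_apply_le _).trans_lt hyz
    _ = _ := by
        rw [hK.measure_preimage (measurableSet_ball.prod measurableSet_ball).nullMeasurableSet,
          Measure.volume_eq_prod, Measure.prod_prod, Measure.addHaar_ball_of_pos _ _ ht,
          Measure.addHaar_ball_of_pos _ _ hρ, ← ofReal_measureReal, ← ofReal_measureReal,
          ← ENNReal.ofReal_mul (by positivity), ← ENNReal.ofReal_mul (by positivity),
          ← ENNReal.ofReal_mul (by positivity)]
        ring_nf

/-- Lebesgue measure with the density `(1 + ‖y_K‖) ^ (-c)`, where `y_K` is the component of `y` in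
the subspace `K`. For `K = Vᗮ` the density decays with the distance to `V`. -/
noncomputable def slabMeasure (K : Submodule ℝ E) (c : ℝ) : Measure E :=
  volume.withDensity fun y => ENNReal.ofReal ((1 + ‖K.orthogonalProjectionOnto y‖) ^ (-c))

lemma rieszPotential_slabMeasure {K : Submodule ℝ E} {c N : ℝ} {f : E → ℝ} (hf : Measurable f)
    (x : E) : rieszPotential (slabMeasure K c) N f x =
      rieszPotential volume N
        (fun y => (1 + ‖K.orthogonalProjectionOnto y‖) ^ (-c) * f y) x := by
  have hdensity : Measurable fun y : E =>
      ENNReal.ofReal ((1 + ‖K.orthogonalProjectionOnto y‖) ^ (-c)) := by fun_prop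
  rw [rieszPotential, slabMeasure, lintegral_withDensity_eq_lintegral_mul _ hdensity (by fun_prop)]
  refine lintegral_congr fun y => ?_
  rw [Pi.mul_apply, ← ENNReal.ofReal_mul (by positivity), mul_left_comm]

lemma exists_isUpperRegular_slabMeasure (K : Submodule ℝ E) {c : ℝ} (hc0 : 0 < c)
    (hcK : c < finrank ℝ K) :
    ∃ M, 0 ≤ M ∧ IsUpperRegular (slabMeasure K c) (finrank ℝ E) M ∧
      IsUpperRegular (slabMeasure K c) (finrank ℝ E - c) M := by
  set A := volume.real (Metric.ball (0 : K) 1) * volume.real (Metric.ball (0 : Kᗮ) 1)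
  set L : ℝ := finrank ℝ K / (finrank ℝ K - c) + 1
  have hL : 1 ≤ L := le_add_of_nonneg_left (div_nonneg (by linarith) (by linarith))
  have hdim : (finrank ℝ E : ℝ) = finrank ℝ Kᗮ + finrank ℝ K := by
    rw [← K.finrank_add_finrank_orthogonal]; push_cast; ring
  have slab (z : E) (ρ : ℝ) (hρ : 0 < ρ) (w : K) (t : ℝ) (ht : 0 < t) :
      volume ({y | ‖K.orthogonalProjectionOnto y - w‖ < t} ∩ Metric.ball z ρ) ≤
        ENNReal.ofReal (A * ρ ^ (finrank ℝ Kᗮ : ℝ) * t ^ (finrank ℝ K : ℝ)) := by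
    simpa only [Real.rpow_natCast] using volume_slab_inter_ball_le K z w hρ ht
  have ball (z : E) (ρ : ℝ) (hρ : 0 < ρ) : volume (Metric.ball z ρ) ≤
      ENNReal.ofReal (A * ρ ^ (finrank ℝ Kᗮ : ℝ) * ρ ^ (finrank ℝ K : ℝ)) := by
    refine (measure_mono fun y hy => mem_inter (mem_ofPred.2 ?_) hy).trans
      (slab z ρ hρ (K.orthogonalProjectionOnto z) ρ hρ)
    rw [← map_sub]
    exact (K.norm_orthogonalProjectionOnto_apply_le _).trans_lt (mem_ball_iff_norm.1 hy)
  refine ⟨L * A, by positivity, fun z ρ hρ => ?_, fun z ρ hρ => ?_⟩ <;>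
    rw [slabMeasure, withDensity_apply _ measurableSet_ball]
  · calc _ ≤ ∫⁻ _ in Metric.ball z ρ, 1 := by
          refine lintegral_mono fun y => ENNReal.ofReal_le_one.2
            (Real.rpow_le_one_of_one_le_of_nonpos (by simp) (by linarith))
      _ ≤ _ := by
          rw [setLIntegral_one]
          refine (ball z ρ hρ).trans (ENNReal.ofReal_le_ofReal ?_)
          rw [mul_assoc, ← Real.rpow_add hρ, ← hdim]
          gcongr
          exact le_mul_of_one_le_left (by positivity) hL
  · refine (setLIntegral_rpow_neg_le (by fun_prop) (fun y => by positivity) (by positivity) hc0 hcK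
      hρ (ball z ρ hρ) fun t ht _ => (measure_mono ?_).trans (slab z ρ hρ 0 t ht)).trans_eq ?_
    · refine inter_subset_inter_left _ fun y (hy : _ < t) => ?_
      rw [mem_ofPred, sub_zero]
      linarith
    · rw [hdim, add_sub_assoc, Real.rpow_add hρ]
      simp only [L]
      ring_nf

end OrthogonalSlab

section Packing

variable {F : Type*} [NormedAddCommGroup F] [NormedSpace ℝ F] [FiniteDimensional ℝ F]
  {ι : Type*} {X : ι → F} {d : ℝ}

lemma card_le_of_pairwise_le_norm_sub (hd : 0 < d) (hX : Pairwise fun i j => d ≤ ‖X i - X j‖)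
    {s : Finset ι} {p : F} {ρ : ℝ} (hρ : 0 < ρ) (hs : ∀ i ∈ s, d / 2 + ‖p - X i‖ ≤ ρ) :
    (s.card : ℝ) ≤ (2 / d * ρ) ^ finrank ℝ F := by
  let : MeasurableSpace F := borel F
  have : BorelSpace F := ⟨rfl⟩
  let μ : Measure F := Measure.addHaar
  have disjoint : (s : Set ι).PairwiseDisjoint fun i => Metric.ball (X i) (d / 2) :=
    fun i _ j _ hij => Metric.ball_disjoint_ball (by
      rw [dist_eq_norm]; linarith [hX hij])
  have subset : ⋃ i ∈ s, Metric.ball (X i) (d / 2) ⊆ Metric.ball p ρ :=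
    iUnion₂_subset fun i hi => Metric.ball_subset_ball' (by
      rw [dist_eq_norm']; linarith [hs i hi])
  have volumes : (s.card : ℝ≥0∞) * ENNReal.ofReal ((d / 2) ^ finrank ℝ F) * μ (Metric.ball 0 1) ≤
      ENNReal.ofReal (ρ ^ finrank ℝ F) * μ (Metric.ball 0 1) := by
    rw [← Measure.addHaar_ball_of_pos μ p hρ]
    refine (Eq.le ?_).trans (measure_mono subset)
    rw [measure_biUnion_finset disjoint fun _ _ => measurableSet_ball]
    simp only [Measure.addHaar_ball_of_pos μ _ (half_pos hd), Finset.sum_const, nsmul_eq_mul,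
      mul_assoc]
  rw [ENNReal.mul_le_mul_iff_left (Metric.measure_ball_pos μ _ one_pos).ne' measure_ball_lt_top.ne,
    ← ENNReal.ofReal_natCast, ← ENNReal.ofReal_mul (by positivity),
    ENNReal.ofReal_le_ofReal_iff (by positivity), ← le_div_iff₀ (by positivity),
    ← div_pow] at volumes
  refine volumes.trans_eq ?_
  congr 1
  field_simp

lemma sum_add_norm_sub_rpow_neg_le [Fintype ι] (hd : 0 < d)
    (hX : Pairwise fun i j => d ≤ ‖X i - X j‖) {b t : ℝ} (hb : finrank ℝ F < b)
    (ht : d / 2 ≤ t) (p : F) :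
    ∑ i, (t + ‖p - X i‖) ^ (-b) ≤
      b / (b - finrank ℝ F) * (2 / d) ^ finrank ℝ F * t ^ (finrank ℝ F - b) := by
  have ht0 : 0 < t := by linarith
  have hb0 : 0 < b := (Nat.cast_nonneg _).trans_lt hb
  have : 0 ≤ b / (b - finrank ℝ F) := div_nonneg hb0.le (by linarith)
  let : MeasurableSpace ι := ⊤
  have growth (ρ : ℝ) (hρ : t ≤ ρ) : Measure.count {i | t + ‖p - X i‖ < ρ} ≤
      ENNReal.ofReal ((2 / d) ^ finrank ℝ F * ρ ^ (finrank ℝ F : ℝ)) := by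
    classical
    rw [Measure.count_apply_finite _ (toFinite _), ← ENNReal.ofReal_natCast, Real.rpow_natCast,
      ← mul_pow]
    refine ENNReal.ofReal_le_ofReal (card_le_of_pairwise_le_norm_sub hd hX (p := p)
      (ht0.trans_le hρ) fun i hi => ?_)
    rw [Finite.mem_toFinset, mem_ofPred] at hi
    linarith
  have hsum := lintegral_rpow_neg_superlevel_le (g := fun i => t + ‖p - X i‖) (measurable_from_top)
    (fun i => by positivity) (by positivity) hb0 hb ht0 growth
  have huniv : {i | t ≤ t + ‖p - X i‖} = univ := by simp
  rw [huniv, setLIntegral_univ, lintegral_count, tsum_fintype,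
    ← ENNReal.ofReal_sum_of_nonneg fun i _ => by positivity,
    ENNReal.ofReal_le_ofReal_iff (by positivity)] at hsum
  exact hsum

end Packing

lemma rpow_neg_le_mul_rpow_neg {x y c a : ℝ} (hx : 0 < x) (hc : 0 < c) (h : x ≤ c * y)
    (ha : 0 ≤ a) : y ^ (-a) ≤ c ^ a * x ^ (-a) := by
  have hxc : 0 < x / c := div_pos hx hc
  calc y ^ (-a) ≤ (x / c) ^ (-a) :=
        Real.rpow_le_rpow_of_nonpos hxc ((div_le_iff₀' hc).2 h) (neg_nonpos.2 ha)
    _ = c ^ a * x ^ (-a) := by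
        rw [Real.div_rpow hx.le hc.le, Real.rpow_neg hc.le, div_inv_eq_mul, mul_comm]

lemma div_rpow_mul_rpow_neg {u v κ b : ℝ} (hu : 0 < u) (hv : 0 < v) :
    (u / v) ^ κ * u ^ (-b) = v ^ (-κ) * u ^ (-(b - κ)) := by
  rw [Real.div_rpow hu.le hv.le, Real.rpow_neg hv.le, neg_sub, Real.rpow_sub hu,
    Real.rpow_neg hu.le]
  field_simp

section DecaySum

variable {E ι : Type*} [SeminormedAddCommGroup E] {X : ι → E} {lam κ b : ℝ} {y : E}

/-- The cutoff `γ(y) = min (minᵢ ((1 + ‖y - Xᵢ‖) / λ) ^ κ, 1)`, which is small within distance `λ`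
of the points `Xᵢ`. -/
noncomputable def cutoff (X : ι → E) (lam κ : ℝ) (y : E) : ℝ :=
  min (⨅ i, ((1 + ‖y - X i‖) / lam) ^ κ) 1

lemma cutoff_nonneg (hlam : 0 ≤ lam) : 0 ≤ cutoff X lam κ y :=
  le_min (Real.iInf_nonneg fun _ => by positivity) zero_le_one

lemma cutoff_le_rpow [Finite ι] (X : ι → E) (lam κ : ℝ) (y : E) (i : ι) :
    cutoff X lam κ y ≤ ((1 + ‖y - X i‖) / lam) ^ κ :=
  (min_le_left _ _).trans (ciInf_le (finite_range _).bddBelow i)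

lemma cutoff_eq_min_of_forall_norm_sub_le [Finite ι] {i : ι} (hlam : 0 < lam) (hκ : 0 ≤ κ)
    (hi : ∀ j, ‖y - X i‖ ≤ ‖y - X j‖) :
    cutoff X lam κ y = min (((1 + ‖y - X i‖) / lam) ^ κ) 1 := by
  have : Nonempty ι := ⟨i⟩
  refine congrArg (min · 1) (le_antisymm (ciInf_le (finite_range _).bddBelow i)
    (le_ciInf fun j => ?_))
  gcongr
  exact hi j

lemma measurable_cutoff [MeasurableSpace E] [OpensMeasurableSpace E] [Countable ι] (X : ι → E)
    (lam κ : ℝ) : Measurable (cutoff X lam κ) := by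
  refine Measurable.min (.iInf fun i => ?_) measurable_const
  have : Measurable fun y : E => (1 + ‖y - X i‖) / lam := Continuous.measurable (by fun_prop)
  exact this.pow_const _

variable [Fintype ι]

/-- The sum `∑ h, (1 + ‖y - X h‖) ^ (-b)` of algebraically decaying profiles of exponent `b`
centred at the points `X h`. -/
noncomputable def decaySum (X : ι → E) (b : ℝ) (y : E) : ℝ := ∑ h, (1 + ‖y - X h‖) ^ (-b)

lemma decaySum_nonneg (X : ι → E) (b : ℝ) (y : E) : 0 ≤ decaySum X b y :=
  Finset.sum_nonneg fun _ _ => by positivity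

lemma rpow_neg_le_decaySum (X : ι → E) (b : ℝ) (y : E) (i : ι) :
    (1 + ‖y - X i‖) ^ (-b) ≤ decaySum X b y :=
  Finset.single_le_sum (f := fun h => (1 + ‖y - X h‖) ^ (-b)) (fun _ _ => by positivity)
    (Finset.mem_univ i)

lemma cutoff_mul_decaySum_le_decaySum : cutoff X lam κ y * decaySum X b y ≤ decaySum X b y :=
  mul_le_of_le_one_left (decaySum_nonneg X b y) (min_le_right _ _)

lemma cutoff_mul_decaySum_le (hlam : 0 < lam) :
    cutoff X lam κ y * decaySum X b y ≤ lam ^ (-κ) * decaySum X (b - κ) y := by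
  simp only [decaySum, Finset.mul_sum]
  refine Finset.sum_le_sum fun i _ => ?_
  calc cutoff X lam κ y * (1 + ‖y - X i‖) ^ (-b)
      ≤ ((1 + ‖y - X i‖) / lam) ^ κ * (1 + ‖y - X i‖) ^ (-b) := by
        gcongr
        exact cutoff_le_rpow X lam κ y i
    _ = lam ^ (-κ) * (1 + ‖y - X i‖) ^ (-(b - κ)) :=
        div_rpow_mul_rpow_neg (by positivity) hlam

variable [MeasurableSpace E] [OpensMeasurableSpace E]

lemma measurable_decaySum (X : ι → E) (b : ℝ) : Measurable (decaySum X b) :=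
  Finset.measurable_sum _ fun i _ => by
    have : Measurable fun y : E => 1 + ‖y - X i‖ := Continuous.measurable (by fun_prop)
    exact this.pow_const _

lemma exists_rieszPotential_decaySum_le {μ : Measure E} {N α ν M : ℝ} (hM : 0 ≤ M) (hb : 0 < b)
    (hbα : b < α) (hαN : α < N) (hNν : N < ν) (hμν : IsUpperRegular μ ν M)
    (hμα : IsUpperRegular μ α M) :
    ∃ C > 0, ∀ {ι : Type*} [Fintype ι] (X : ι → E) (x : E),
      rieszPotential μ N (decaySum X b) x ≤ ENNReal.ofReal (C * decaySum X b x) := by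
  obtain ⟨C, hC, hbound⟩ :=
    exists_rieszPotential_one_add_norm_rpow_neg_le hM hb hbα hαN hNν hμν hμα
  refine ⟨C, hC, fun {ι} _ X x => ?_⟩
  have hmeas (i : ι) : Measurable fun y : E => ‖x - y‖ ^ (-N) * (1 + ‖y - X i‖) ^ (-b) := by
    have h1 : Measurable fun y : E => ‖x - y‖ := Continuous.measurable (by fun_prop)
    have h2 : Measurable fun y : E => 1 + ‖y - X i‖ := Continuous.measurable (by fun_prop)
    exact (h1.pow_const _).mul (h2.pow_const _)
  calc rieszPotential μ N (decaySum X b) x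
      = ∑ i, rieszPotential μ N (fun y => (1 + ‖y - X i‖) ^ (-b)) x := by
        simp only [rieszPotential, decaySum, Finset.mul_sum]
        rw [← lintegral_finsetSum _ fun i _ => (hmeas i).ennreal_ofReal]
        exact lintegral_congr fun y => ENNReal.ofReal_sum_of_nonneg fun i _ => by positivity
    _ ≤ ∑ i, ENNReal.ofReal (C * (1 + ‖x - X i‖) ^ (-b)) := Finset.sum_le_sum fun i _ => hbound x _
    _ = ENNReal.ofReal (C * decaySum X b x) := by
        rw [← ENNReal.ofReal_sum_of_nonneg fun i _ => by positivity, decaySum, Finset.mul_sum]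

end DecaySum

section SeparatedPoints

variable {E ι : Type*} [NormedAddCommGroup E] [InnerProductSpace ℝ E]

/-- The points `X i` lie in the subspace `V` and have mutual distances at least `d`. This is all
that the estimates use of a lattice of spacing `d` in `V`. -/
structure IsSeparatedIn (V : Submodule ℝ E) (d : ℝ) (X : ι → E) : Prop where
  mem : ∀ i, X i ∈ V
  le_norm_sub : Pairwise fun i j => d ≤ ‖X i - X j‖

lemma IsSeparatedIn.norm_orthogonalProjectionOnto_orthogonal_le [FiniteDimensional ℝ E]
    {V : Submodule ℝ E} {d : ℝ} {X : ι → E} (hX : IsSeparatedIn V d X) (y : E) (i : ι) :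
    ‖Vᗮ.orthogonalProjectionOnto y‖ ≤ ‖y - X i‖ := by
  have hXi : Vᗮ.orthogonalProjectionOnto (X i) = 0 :=
    Submodule.orthogonalProjectionOnto_orthogonal_apply_eq_zero (hX.mem i)
  simpa only [map_sub, hXi, sub_zero] using
    Vᗮ.norm_orthogonalProjectionOnto_apply_le (y - X i)

variable [Fintype ι]

namespace IsSeparatedIn

variable [FiniteDimensional ℝ E] {V : Submodule ℝ E} {d b : ℝ} {X : ι → E} {y : E} {i : ι}

lemma sum_add_norm_sub_rpow_neg_le (hX : IsSeparatedIn V d X) (hd : 0 < d) (hb : finrank ℝ V < b)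
    {t : ℝ} (ht : d / 2 ≤ t) (y : E) :
    ∑ i, (t + ‖y - X i‖) ^ (-b) ≤
      b / (b - finrank ℝ V) * (2 / d) ^ finrank ℝ V * t ^ (finrank ℝ V - b) := by
  have : 0 ≤ b := (Nat.cast_nonneg _).trans hb.le
  have ht0 : 0 < t := by linarith
  refine (Finset.sum_le_sum fun i _ => ?_).trans
    (_root_.sum_add_norm_sub_rpow_neg_le (X := fun i => (⟨X i, hX.mem i⟩ : V)) hd hX.le_norm_sub
      hb ht (V.orthogonalProjectionOnto y))
  refine Real.rpow_le_rpow_of_nonpos (by positivity) ?_ (by linarith)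
  have hproj : V.orthogonalProjectionOnto y - ⟨X i, hX.mem i⟩ =
      V.orthogonalProjectionOnto (y - X i) := by
    rw [map_sub, ← V.orthogonalProjectionOnto_mem_subspace_eq_self ⟨X i, hX.mem i⟩]
  rw [hproj]
  gcongr
  exact V.norm_orthogonalProjectionOnto_apply_le _

lemma decaySum_le_of_norm_sub_le (hX : IsSeparatedIn V d X) (hd : 1 ≤ d) (hb : finrank ℝ V < b)
    (hi : ∀ j, ‖y - X i‖ ≤ ‖y - X j‖) (hyd : ‖y - X i‖ ≤ d) :
    decaySum X b y ≤ (1 + 8 ^ b * (b / (b - finrank ℝ V))) * (1 + ‖y - X i‖) ^ (-b) := by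
  classical
  have hd0 : 0 < d / 2 := by linarith
  have hb0 : 0 ≤ b := (Nat.cast_nonneg _).trans hb.le
  have : 0 ≤ b / (b - finrank ℝ V) := div_nonneg hb0 (by linarith)
  have far (j : ι) (hj : j ≠ i) :
      (1 + ‖y - X j‖) ^ (-b) ≤ 2 ^ b * (d / 2 + ‖y - X j‖) ^ (-b) := by
    refine rpow_neg_le_mul_rpow_neg (by positivity) two_pos ?_ hb0
    linarith [hi j, hX.le_norm_sub hj, norm_sub_le_norm_sub_add_norm_sub (X j) y (X i),
      norm_sub_rev (X j) y]
  have hscale : (d / 2) ^ (-b) ≤ 4 ^ b * (1 + ‖y - X i‖) ^ (-b) :=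
    rpow_neg_le_mul_rpow_neg (by positivity) four_pos (by linarith) hb0
  calc decaySum X b y
      = (1 + ‖y - X i‖) ^ (-b) + ∑ j ∈ Finset.univ.erase i, (1 + ‖y - X j‖) ^ (-b) :=
        (Finset.add_sum_erase _ _ (Finset.mem_univ i)).symm
    _ ≤ (1 + ‖y - X i‖) ^ (-b) + 2 ^ b * ∑ j, (d / 2 + ‖y - X j‖) ^ (-b) := by
        rw [Finset.mul_sum]
        gcongr
        exact (Finset.sum_le_sum fun j hj => far j (Finset.ne_of_mem_erase hj)).trans
          (Finset.sum_le_univ_sum_of_nonneg fun j => by positivity)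
    _ ≤ (1 + ‖y - X i‖) ^ (-b) + 2 ^ b * (b / (b - finrank ℝ V) * (d / 2) ^ (-b)) := by
        gcongr
        refine (hX.sum_add_norm_sub_rpow_neg_le (by linarith) hb le_rfl y).trans_eq ?_
        rw [mul_assoc, Real.rpow_sub hd0, Real.rpow_natCast, Real.rpow_neg hd0.le, ← inv_div d,
          inv_pow]
        field_simp
    _ ≤ (1 + ‖y - X i‖) ^ (-b) +
          2 ^ b * (b / (b - finrank ℝ V) * (4 ^ b * (1 + ‖y - X i‖) ^ (-b))) := by gcongr
    _ = _ := by
        rw [show (8 : ℝ) = 2 * 4 by norm_num, Real.mul_rpow two_pos.le four_pos.le]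
        ring

lemma decaySum_le_of_le_norm_sub (hX : IsSeparatedIn V d X) (hd : 0 < d) (hb : finrank ℝ V < b)
    (hi : ∀ j, ‖y - X i‖ ≤ ‖y - X j‖) (hyd : d ≤ ‖y - X i‖) :
    decaySum X b y ≤ 2 ^ (b + finrank ℝ V) * (b / (b - finrank ℝ V)) *
      d ^ (-(finrank ℝ V : ℝ)) * (1 + ‖y - X i‖) ^ (finrank ℝ V - b) := by
  have hb0 : 0 ≤ b := (Nat.cast_nonneg _).trans hb.le
  calc decaySum X b y
      ≤ 2 ^ b * ∑ j, ((1 + ‖y - X i‖) + ‖y - X j‖) ^ (-b) := by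
        rw [Finset.mul_sum]
        exact Finset.sum_le_sum fun j _ =>
          rpow_neg_le_mul_rpow_neg (by positivity) two_pos (by linarith [hi j]) hb0
    _ ≤ 2 ^ b * (b / (b - finrank ℝ V) * (2 / d) ^ finrank ℝ V *
          (1 + ‖y - X i‖) ^ (finrank ℝ V - b)) := by
        gcongr
        exact hX.sum_add_norm_sub_rpow_neg_le hd hb (by linarith) y
    _ = _ := by
        rw [Real.rpow_add two_pos, Real.rpow_natCast, Real.rpow_neg hd.le, Real.rpow_natCast,
          div_pow]
        ring

lemma min_decaySum_le_cutoff_mul_decaySum [Nonempty ι] {lam κ : ℝ} (hX : IsSeparatedIn V d X)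
    (hlam : 1 ≤ lam) (hlamd : lam ≤ d) (hκ : 0 ≤ κ) (hb : finrank ℝ V < b - κ) (y : E) :
    min (decaySum X b y) (lam ^ (-κ) * decaySum X (b - κ) y) ≤
      (1 + 8 ^ (b - κ) * ((b - κ) / (b - κ - finrank ℝ V))) *
        (cutoff X lam κ y * decaySum X b y) := by
  have hlam0 : 0 < lam := one_pos.trans_le hlam
  set A := 8 ^ (b - κ) * ((b - κ) / (b - κ - finrank ℝ V))
  have hbκ : 0 < b - κ := (Nat.cast_nonneg _).trans_lt hb
  have hA : 0 ≤ A := mul_nonneg (by positivity) (div_nonneg hbκ.le (by linarith))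
  obtain ⟨i, hi⟩ := Finite.exists_min fun i => ‖y - X i‖
  rw [cutoff_eq_min_of_forall_norm_sub_le hlam0 hκ hi]
  rcases le_total lam (1 + ‖y - X i‖) with h | h
  · rw [min_eq_right (Real.one_le_rpow ((one_le_div hlam0).2 h) hκ), one_mul]
    exact (min_le_left _ _).trans
      (le_mul_of_one_le_left (decaySum_nonneg X b y) (le_add_of_nonneg_right hA))
  · rw [min_eq_left (Real.rpow_le_one (by positivity) ((div_le_one hlam0).2 h) hκ)]
    calc min (decaySum X b y) (lam ^ (-κ) * decaySum X (b - κ) y)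
        ≤ lam ^ (-κ) * ((1 + A) * (1 + ‖y - X i‖) ^ (-(b - κ))) := by
          refine (min_le_right _ _).trans ?_
          gcongr
          exact hX.decaySum_le_of_norm_sub_le (hlam.trans hlamd) hb hi (by linarith)
      _ = (1 + A) * (((1 + ‖y - X i‖) / lam) ^ κ * (1 + ‖y - X i‖) ^ (-b)) := by
          rw [div_rpow_mul_rpow_neg (by positivity) hlam0, mul_left_comm]
      _ ≤ (1 + A) * (((1 + ‖y - X i‖) / lam) ^ κ * decaySum X b y) := by
          gcongr
          exact rpow_neg_le_decaySum X b y i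

lemma decaySum_rpow_mul_decaySum_le_of_norm_sub_le {p a c σ : ℝ} (hX : IsSeparatedIn V d X)
    (hd : 1 ≤ d) (hb : finrank ℝ V < b) (ha : finrank ℝ V < a) (hp : 0 ≤ p) (hc : 0 ≤ c)
    (hnear : c + σ ≤ b * p) (hi : ∀ j, ‖y - X i‖ ≤ ‖y - X j‖) (hyd : ‖y - X i‖ ≤ d) :
    decaySum X b y ^ p * decaySum X a y ≤
      (1 + 8 ^ b * (b / (b - finrank ℝ V))) ^ p * (1 + 8 ^ a * (a / (a - finrank ℝ V))) *
        ((1 + ‖Vᗮ.orthogonalProjectionOnto y‖) ^ (-c) * decaySum X (a + σ) y) := by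
  have hbV : 0 ≤ b / (b - finrank ℝ V) :=
    div_nonneg ((Nat.cast_nonneg _).trans hb.le) (by linarith)
  have haV : 0 ≤ a / (a - finrank ℝ V) :=
    div_nonneg ((Nat.cast_nonneg _).trans ha.le) (by linarith)
  have hSb := decaySum_nonneg X b y
  have hSa := decaySum_nonneg X a y
  set A := 1 + 8 ^ b * (b / (b - finrank ℝ V))
  set B := 1 + 8 ^ a * (a / (a - finrank ℝ V))
  have hA : 0 ≤ A := by positivity
  set u := 1 + ‖y - X i‖
  have hu1 : 1 ≤ u := le_add_of_nonneg_right (norm_nonneg _)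
  have hu0 : 0 < u := one_pos.trans_le hu1
  calc decaySum X b y ^ p * decaySum X a y ≤ (A * u ^ (-b)) ^ p * (B * u ^ (-a)) := by
        gcongr
        · exact hX.decaySum_le_of_norm_sub_le hd hb hi hyd
        · exact hX.decaySum_le_of_norm_sub_le hd ha hi hyd
    _ = A ^ p * B * u ^ (-(b * p) - a) := by
        rw [Real.mul_rpow hA (by positivity), ← Real.rpow_mul hu0.le, neg_mul, sub_eq_add_neg,
          Real.rpow_add hu0]
        ring
    _ ≤ A ^ p * B * u ^ (-c + -(a + σ)) := by
        gcongr
        linarith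
    _ ≤ _ := by
        rw [Real.rpow_add hu0]
        gcongr _ * (?_ * ?_)
        · exact Real.rpow_le_rpow_of_nonpos (by positivity)
            (by linarith [hX.norm_orthogonalProjectionOnto_orthogonal_le y i]) (by linarith)
        · exact rpow_neg_le_decaySum X (a + σ) y i

lemma decaySum_rpow_le_of_le_norm_sub {p c : ℝ} (hX : IsSeparatedIn V d X) (hd : 0 < d)
    (hb : finrank ℝ V < b) (hp : 0 ≤ p) (hc : 0 ≤ c) (hfar : c ≤ (b - finrank ℝ V) * p)
    (hi : ∀ j, ‖y - X i‖ ≤ ‖y - X j‖) (hyd : d ≤ ‖y - X i‖) :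
    decaySum X b y ^ p ≤ (2 ^ (b + finrank ℝ V) * (b / (b - finrank ℝ V))) ^ p *
      ((1 + ‖Vᗮ.orthogonalProjectionOnto y‖) ^ (-c) * d ^ (-(finrank ℝ V * p))) := by
  have hbV : 0 ≤ b / (b - finrank ℝ V) :=
    div_nonneg ((Nat.cast_nonneg _).trans hb.le) (by linarith)
  have hSb := decaySum_nonneg X b y
  set A := 2 ^ (b + finrank ℝ V) * (b / (b - finrank ℝ V))
  have hA : 0 ≤ A := by positivity
  set u := 1 + ‖y - X i‖
  have hu1 : 1 ≤ u := le_add_of_nonneg_right (norm_nonneg _)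
  calc decaySum X b y ^ p ≤ (A * d ^ (-(finrank ℝ V : ℝ)) * u ^ (finrank ℝ V - b)) ^ p := by
        gcongr
        exact hX.decaySum_le_of_le_norm_sub hd hb hi hyd
    _ = A ^ p * (u ^ (-((b - finrank ℝ V) * p)) * d ^ (-(finrank ℝ V * p))) := by
        rw [Real.mul_rpow (by positivity) (by positivity), Real.mul_rpow hA (by positivity),
          ← Real.rpow_mul hd.le, ← Real.rpow_mul (by positivity)]
        ring_nf
    _ ≤ A ^ p * (u ^ (-c) * d ^ (-(finrank ℝ V * p))) := by
        gcongr
    _ ≤ _ := by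
        gcongr _ * (?_ * _)
        exact Real.rpow_le_rpow_of_nonpos (by positivity)
          (by linarith [hX.norm_orthogonalProjectionOnto_orthogonal_le y i]) (by linarith)

end IsSeparatedIn

variable [FiniteDimensional ℝ E]

lemma exists_rieszPotential_cutoff_mul_decaySum_le [MeasurableSpace E] [BorelSpace E]
    (V : Submodule ℝ E) {μ : Measure E} {N α ν M b κ : ℝ} (hM : 0 ≤ M) (hκ : 0 ≤ κ)
    (hbV : finrank ℝ V < b - κ) (hbα : b < α) (hαN : α < N) (hNν : N < ν)
    (hμν : IsUpperRegular μ ν M) (hμα : IsUpperRegular μ α M) :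
    ∃ C > 0, ∀ {ι : Type*} [Fintype ι] [Nonempty ι] {lam d : ℝ} {X : ι → E},
      IsSeparatedIn V d X → 1 ≤ lam → lam ≤ d → ∀ x : E,
      rieszPotential μ N (fun y => cutoff X lam κ y * decaySum X b y) x ≤
        ENNReal.ofReal (C * (cutoff X lam κ x * decaySum X b x)) := by
  have hbκ : 0 < b - κ := (Nat.cast_nonneg _).trans_lt hbV
  obtain ⟨C₁, hC₁, hb₁⟩ :=
    exists_rieszPotential_decaySum_le hM (b := b) (by linarith) hbα hαN hNν hμν hμα
  obtain ⟨C₂, _, hb₂⟩ :=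
    exists_rieszPotential_decaySum_le hM hbκ (by linarith) hαN hNν hμν hμα
  set A := 1 + 8 ^ (b - κ) * ((b - κ) / (b - κ - finrank ℝ V))
  have : 0 < A := add_pos_of_pos_of_nonneg one_pos
    (mul_nonneg (by positivity) (div_nonneg hbκ.le (by linarith)))
  refine ⟨max C₁ C₂ * A, by positivity, fun {ι} _ _ lam d X hX hlam hlamd x => ?_⟩
  have hlam0 : 0 < lam := one_pos.trans_le hlam
  have plain : rieszPotential μ N (fun y => cutoff X lam κ y * decaySum X b y) x ≤
      ENNReal.ofReal (C₁ * decaySum X b x) :=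
    (rieszPotential_mono (fun y => cutoff_mul_decaySum_le_decaySum) x).trans (hb₁ X x)
  have gained : rieszPotential μ N (fun y => cutoff X lam κ y * decaySum X b y) x ≤
      ENNReal.ofReal (C₂ * (lam ^ (-κ) * decaySum X (b - κ) x)) := by
    refine (rieszPotential_mono (fun y => cutoff_mul_decaySum_le hlam0) x).trans ?_
    rw [rieszPotential_const_mul (by positivity), mul_left_comm C₂,
      ENNReal.ofReal_mul (by positivity)]
    gcongr
    exact hb₂ X x
  refine (le_min plain gained).trans ?_
  rw [← ENNReal.ofReal_min, mul_assoc]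
  refine ENNReal.ofReal_le_ofReal (le_trans ?_ (mul_le_mul_of_nonneg_left
    (hX.min_decaySum_le_cutoff_mul_decaySum hlam hlamd hκ hbV x) (by positivity)))
  rw [mul_min_of_nonneg _ _ (by positivity)]
  have := decaySum_nonneg X b x
  have := decaySum_nonneg X (b - κ) x
  gcongr
  · exact le_max_left _ _
  · exact le_max_right _ _

lemma exists_decaySum_rpow_mul_decaySum_le (V : Submodule ℝ E) {b p a c σ : ℝ}
    (hb : finrank ℝ V < b) (ha : finrank ℝ V < a) (hp : 0 ≤ p) (hc : 0 ≤ c)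
    (hnear : c + σ ≤ b * p) (hfar : c ≤ (b - finrank ℝ V) * p) :
    ∃ C > 0, ∀ {ι : Type*} [Fintype ι] [Nonempty ι] {d : ℝ} {X : ι → E},
      IsSeparatedIn V d X → 1 ≤ d → ∀ y : E,
      decaySum X b y ^ p * decaySum X a y ≤ C * ((1 + ‖Vᗮ.orthogonalProjectionOnto y‖) ^ (-c) *
        (decaySum X (a + σ) y + d ^ (-(finrank ℝ V * p)) * decaySum X a y)) := by
  have hbV : 0 < b / (b - finrank ℝ V) :=
    div_pos ((Nat.cast_nonneg _).trans_lt hb) (by linarith)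
  have haV : 0 < a / (a - finrank ℝ V) :=
    div_pos ((Nat.cast_nonneg _).trans_lt ha) (by linarith)
  set A := (1 + 8 ^ b * (b / (b - finrank ℝ V))) ^ p * (1 + 8 ^ a * (a / (a - finrank ℝ V)))
  set B := (2 ^ (b + finrank ℝ V) * (b / (b - finrank ℝ V))) ^ p
  have hA : 0 < A := by positivity
  have hB : 0 < B := by positivity
  refine ⟨A + B, by positivity, fun {ι} _ _ d X hX hd y => ?_⟩
  have hS := decaySum_nonneg X a y
  have hS' := decaySum_nonneg X (a + σ) y
  obtain ⟨i, hi⟩ := Finite.exists_min fun i => ‖y - X i‖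
  rcases le_total ‖y - X i‖ d with hyd | hyd
  · refine (hX.decaySum_rpow_mul_decaySum_le_of_norm_sub_le hd hb ha hp hc hnear hi hyd).trans ?_
    gcongr
    · exact le_add_of_nonneg_right hB.le
    · exact le_add_of_nonneg_right (by positivity)
  · calc decaySum X b y ^ p * decaySum X a y
        ≤ B * ((1 + ‖Vᗮ.orthogonalProjectionOnto y‖) ^ (-c) * d ^ (-(finrank ℝ V * p))) *
            decaySum X a y := by
          gcongr
          exact hX.decaySum_rpow_le_of_le_norm_sub (by linarith) hb hp hc hfar hi hyd
      _ = B * ((1 + ‖Vᗮ.orthogonalProjectionOnto y‖) ^ (-c) *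
            (d ^ (-(finrank ℝ V * p)) * decaySum X a y)) := by ring
      _ ≤ _ := by
          gcongr
          · exact le_add_of_nonneg_left hA.le
          · exact le_add_of_nonneg_left hS'

lemma exists_rieszPotential_cutoff_mul_decaySum_add_le [MeasurableSpace E] [BorelSpace E]
    (V : Submodule ℝ E) {μ : Measure E} {N α ν M a b κ : ℝ} (hM : 0 ≤ M) (hκ : 0 ≤ κ)
    (haV : finrank ℝ V < a - κ) (haα : a < α) (hbV : finrank ℝ V < b - κ) (hbα : b < α)
    (hαN : α < N) (hNν : N < ν) (hμν : IsUpperRegular μ ν M) (hμα : IsUpperRegular μ α M) :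
    ∃ C > 0, ∀ {ι : Type*} [Fintype ι] [Nonempty ι] {lam d ε : ℝ} {X : ι → E},
      IsSeparatedIn V d X → 1 ≤ lam → lam ≤ d → 0 ≤ ε → ∀ x : E,
      rieszPotential μ N (fun y => cutoff X lam κ y * decaySum X b y +
          ε * (cutoff X lam κ y * decaySum X a y)) x ≤
        ENNReal.ofReal (C * (cutoff X lam κ x * decaySum X b x +
          ε * (cutoff X lam κ x * decaySum X a x))) := by
  obtain ⟨A, hA, hpot_a⟩ :=
    exists_rieszPotential_cutoff_mul_decaySum_le V hM hκ haV haα hαN hNν hμν hμα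
  obtain ⟨B, hB, hpot_b⟩ :=
    exists_rieszPotential_cutoff_mul_decaySum_le V hM hκ hbV hbα hαN hNν hμν hμα
  refine ⟨max A B, by positivity, fun {ι} _ _ lam d ε X hX hlam hlamd hε x => ?_⟩
  have hγS (b : ℝ) : 0 ≤ cutoff X lam κ x * decaySum X b x :=
    mul_nonneg (cutoff_nonneg (by linarith)) (decaySum_nonneg X b x)
  have := hγS a
  have := hγS b
  calc _ ≤ ENNReal.ofReal (B * (cutoff X lam κ x * decaySum X b x)) +
        ENNReal.ofReal ε * ENNReal.ofReal (A * (cutoff X lam κ x * decaySum X a x)) := by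
        refine (rieszPotential_add_le
          ((measurable_cutoff X lam κ).mul (measurable_decaySum X b)) _ x).trans ?_
        rw [rieszPotential_const_mul hε]
        gcongr
        · exact hpot_b hX hlam hlamd x
        · exact hpot_a hX hlam hlamd x
    _ ≤ _ := by
        rw [← ENNReal.ofReal_mul hε, ← ENNReal.ofReal_add (by positivity) (by positivity)]
        refine ENNReal.ofReal_le_ofReal ?_
        rw [mul_add (max A B), mul_left_comm (max A B) ε]
        gcongr ?_ * _ + _ * (?_ * _)
        · exact le_max_right _ _
        · exact le_max_left _ _

lemma exists_rieszPotential_decaySum_rpow_mul_le [MeasurableSpace E] [BorelSpace E]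
    (V : Submodule ℝ E) {N b p a c σ κ : ℝ} (hb : finrank ℝ V < b) (hp : 0 ≤ p) (hσ : 0 ≤ σ)
    (hκ : 0 ≤ κ) (ha : finrank ℝ V < a - κ) (hc0 : 0 < c) (hcV : c < finrank ℝ Vᗮ)
    (haσ : a + σ < finrank ℝ E - c) (hcN : finrank ℝ E - c < N) (hN : N < finrank ℝ E)
    (hnear : c + σ ≤ b * p) (hfar : c ≤ (b - finrank ℝ V) * p) :
    ∃ C > 0, ∀ {ι : Type*} [Fintype ι] [Nonempty ι] {lam d : ℝ} {X : ι → E},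
      IsSeparatedIn V d X → 1 ≤ lam → lam ≤ d → ∀ x : E,
      rieszPotential volume N
          (fun y => decaySum X b y ^ p * (cutoff X lam κ y * decaySum X a y)) x ≤
        ENNReal.ofReal (C * (cutoff X lam κ x * decaySum X (a + σ) x +
          d ^ (-(finrank ℝ V * p)) * (cutoff X lam κ x * decaySum X a x))) := by
  obtain ⟨M, hM, hreg, hreg'⟩ := exists_isUpperRegular_slabMeasure Vᗮ hc0 hcV
  obtain ⟨A, hA, hdecay⟩ :=
    exists_decaySum_rpow_mul_decaySum_le V hb (a := a) (by linarith) hp hc0.le hnear hfar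
  obtain ⟨B, hB, hpot⟩ := exists_rieszPotential_cutoff_mul_decaySum_add_le V (b := a + σ) hM hκ ha
    (by linarith) (by linarith) haσ hcN hN hreg hreg'
  refine ⟨A * B, by positivity, fun {ι} _ _ lam d X hX hlam hlamd x => ?_⟩
  set ε := d ^ (-(finrank ℝ V * p))
  have hε : 0 ≤ ε := Real.rpow_nonneg (by linarith) _
  have hmeas (a : ℝ) : Measurable fun y => cutoff X lam κ y * decaySum X a y :=
    (measurable_cutoff X lam κ).mul (measurable_decaySum X a)
  have pointwise (y : E) : decaySum X b y ^ p * (cutoff X lam κ y * decaySum X a y) ≤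
      A * ((1 + ‖Vᗮ.orthogonalProjectionOnto y‖) ^ (-c) *
        (cutoff X lam κ y * decaySum X (a + σ) y + ε * (cutoff X lam κ y * decaySum X a y))) := by
    linear_combination mul_le_mul_of_nonneg_left (hdecay hX (hlam.trans hlamd) y)
      (cutoff_nonneg (X := X) (κ := κ) (y := y) (zero_le_one.trans hlam))
  refine (rieszPotential_mono pointwise x).trans ?_
  rw [rieszPotential_const_mul hA.le, ← rieszPotential_slabMeasure (by fun_prop), mul_assoc A,
    ENNReal.ofReal_mul hA.le]
  gcongr
  exact hpot hX hlam hlamd hε x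

end SeparatedPoints

section Bubbles

variable {E ι : Type*} [SeminormedAddCommGroup E] [Fintype ι] {N R C₀ C₁ C₂ : ℝ}

/-- The sum `W = ∑ i, U_{Pᵢ,Λᵢ}` of the bubbles `U_{ξ,Λ}(y) = C₀ (Λ / (1 + Λ² ‖y - ξ‖²)) ^ (N / 2)`,
where `N = n - 2s` in dimension `n`. -/
noncomputable def bubbleSum (C₀ N : ℝ) (P : ι → E) (Λ : ι → ℝ) (y : E) : ℝ :=
  ∑ i, C₀ * (Λ i / (1 + Λ i ^ 2 * ‖y - P i‖ ^ 2)) ^ (N / 2)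

lemma measurable_bubbleSum [MeasurableSpace E] [OpensMeasurableSpace E] (C₀ N : ℝ) (P : ι → E)
    (Λ : ι → ℝ) : Measurable (bubbleSum C₀ N P Λ) :=
  Finset.measurable_sum _ fun i _ => by
    have : Measurable fun y : E => 1 + Λ i ^ 2 * ‖y - P i‖ ^ 2 :=
      Continuous.measurable (by fun_prop)
    exact ((this.const_div _).pow_const _).const_mul _

lemma bubbleSum_nonneg {P : ι → E} {Λ : ι → ℝ} (hC₀ : 0 ≤ C₀) (hΛ : ∀ i, 0 ≤ Λ i) (y : E) :
    0 ≤ bubbleSum C₀ N P Λ y :=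
  Finset.sum_nonneg fun i _ => by
    have := hΛ i
    positivity

lemma div_one_add_sq_mul_norm_sub_sq_le {Λ : ℝ} {p z : E} (hC₁ : 0 < C₁) (hΛ : Λ ∈ Icc C₁ C₂)
    (hpz : ‖p - z‖ ≤ R) (y : E) :
    Λ / (1 + Λ ^ 2 * ‖y - p‖ ^ 2) ≤
      2 * (1 + R) ^ 2 * (C₂ + C₁⁻¹) * (1 + ‖y - z‖) ^ (-2 : ℝ) := by
  have hΛ0 : 0 < Λ := hC₁.trans_le hΛ.1
  have hR : 0 ≤ R := (norm_nonneg _).trans hpz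
  set q := ‖y - p‖
  have hq : 0 ≤ q := norm_nonneg _
  have center : 1 + ‖y - z‖ ≤ (1 + R) * (1 + q) := by
    nlinarith [norm_sub_le_norm_sub_add_norm_sub y p z]
  have scale : Λ * (1 + q ^ 2) ≤ (C₂ + C₁⁻¹) * (1 + Λ ^ 2 * q ^ 2) := by
    have : Λ + Λ⁻¹ ≤ C₂ + C₁⁻¹ := add_le_add hΛ.2 (inv_anti₀ hC₁ hΛ.1)
    calc Λ * (1 + q ^ 2) ≤ Λ * (1 + q ^ 2) + (Λ⁻¹ + Λ ^ 3 * q ^ 2) :=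
          le_add_of_nonneg_right (by positivity)
      _ = (Λ + Λ⁻¹) * (1 + Λ ^ 2 * q ^ 2) := by field_simp; ring
      _ ≤ _ := by gcongr
  have : 0 ≤ C₂ + C₁⁻¹ := add_nonneg (hΛ0.le.trans hΛ.2) (inv_nonneg.2 hC₁.le)
  rw [Real.rpow_neg (by positivity), Real.rpow_two, ← div_eq_mul_inv,
    div_le_div_iff₀ (by positivity) (by positivity)]
  calc Λ * (1 + ‖y - z‖) ^ 2 ≤ Λ * ((1 + R) * (1 + q)) ^ 2 := by gcongr
    _ ≤ 2 * (1 + R) ^ 2 * (Λ * (1 + q ^ 2)) := by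
        rw [mul_pow]
        nlinarith [mul_nonneg (mul_nonneg hΛ0.le (sq_nonneg (1 + R))) (sq_nonneg (1 - q))]
    _ ≤ 2 * (1 + R) ^ 2 * ((C₂ + C₁⁻¹) * (1 + Λ ^ 2 * q ^ 2)) := by gcongr
    _ = _ := by ring

lemma bubbleSum_le_decaySum {X P : ι → E} {Λ : ι → ℝ} (hN : 0 ≤ N) (hC₀ : 0 ≤ C₀) (hC₁ : 0 < C₁)
    (hP : ∀ i, ‖P i - X i‖ ≤ R) (hΛ : ∀ i, Λ i ∈ Icc C₁ C₂) (y : E) :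
    bubbleSum C₀ N P Λ y ≤
      C₀ * (2 * (1 + R) ^ 2 * (C₂ + C₁⁻¹)) ^ (N / 2) * decaySum X N y := by
  rw [bubbleSum, decaySum, Finset.mul_sum]
  refine Finset.sum_le_sum fun i _ => ?_
  have hΛ0 : 0 < Λ i := hC₁.trans_le (hΛ i).1
  have hK : 0 ≤ C₂ + C₁⁻¹ := add_nonneg (hΛ0.le.trans (hΛ i).2) (inv_nonneg.2 hC₁.le)
  calc C₀ * (Λ i / (1 + Λ i ^ 2 * ‖y - P i‖ ^ 2)) ^ (N / 2)
      ≤ C₀ * (2 * (1 + R) ^ 2 * (C₂ + C₁⁻¹) * (1 + ‖y - X i‖) ^ (-2 : ℝ)) ^ (N / 2) := by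
        gcongr
        exact div_one_add_sq_mul_norm_sub_sq_le hC₁ (hΛ i) (hP i) y
    _ = _ := by
        rw [Real.mul_rpow (by positivity) (by positivity), ← Real.rpow_mul (by positivity)]
        ring_nf

end Bubbles

section Main

variable {E : Type*} [NormedAddCommGroup E] [InnerProductSpace ℝ E] [FiniteDimensional ℝ E]
  [MeasurableSpace E] [BorelSpace E]

-- The factor `decaySum X N ^ (4 * s / N)` supplies `4s` powers of decay near the points but only
-- `4s - 4sk/N` far from them. The slab weight takes `2s + θ`, so `k < N / 2` leaves room for `θ`.
lemma exists_rieszPotential_decaySum_rpow_mul_le_of_lt_half (V : Submodule ℝ E) {s N a κ : ℝ}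
    (hs : 0 < s) (hN : N = finrank ℝ E - 2 * s) (hV : finrank ℝ V < N / 2) (hκ : 0 ≤ κ)
    (ha : finrank ℝ V < a - κ) (haN : a < N) :
    ∃ θ > 0, ∃ C > 0, ∀ {ι : Type*} [Fintype ι] [Nonempty ι] {lam d : ℝ} {X : ι → E},
      IsSeparatedIn V d X → 1 ≤ lam → lam ≤ d → ∀ x : E,
      rieszPotential volume N
          (fun y => decaySum X N y ^ (4 * s / N) * (cutoff X lam κ y * decaySum X a y)) x ≤
        ENNReal.ofReal (C * (cutoff X lam κ x * decaySum X (a + θ) x +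
          d ^ (-(4 * s * finrank ℝ V / N)) * (cutoff X lam κ x * decaySum X a x))) := by
  have hN0 : 0 < N := by linarith [Nat.cast_nonneg (α := ℝ) (finrank ℝ V)]
  have hdim : (finrank ℝ E : ℝ) = finrank ℝ V + finrank ℝ Vᗮ := by
    exact_mod_cast V.finrank_add_finrank_orthogonal.symm
  have hδ : 4 * s * finrank ℝ V / N < 2 * s := by
    rw [div_lt_iff₀ hN0]
    nlinarith
  obtain ⟨θ, hθ, hθmin⟩ := exists_between (show 0 < min (min s (2 * s - 4 * s * finrank ℝ V / N))
    (min (finrank ℝ Vᗮ - 2 * s) ((N - a) / 2)) by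
      simp only [lt_min_iff]
      refine ⟨⟨hs, ?_⟩, ?_, ?_⟩ <;> linarith)
  simp only [lt_min_iff] at hθmin
  obtain ⟨⟨hθs, hθδ⟩, hθV, hθa⟩ := hθmin
  have hnear : 2 * s + θ + θ ≤ N * (4 * s / N) := by
    rw [mul_div_cancel₀ _ hN0.ne']
    linarith
  have hfar : 2 * s + θ ≤ (N - finrank ℝ V) * (4 * s / N) := by
    have : (N - finrank ℝ V) * (4 * s / N) = 4 * s - 4 * s * finrank ℝ V / N := by
      field_simp
    linarith
  obtain ⟨C, hC, h⟩ := exists_rieszPotential_decaySum_rpow_mul_le V (N := N) (b := N)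
    (p := 4 * s / N) (a := a) (c := 2 * s + θ) (by linarith) (by positivity) hθ.le hκ ha
    (by linarith) (lt_sub_iff_add_lt'.1 hθV) (by linarith) (by linarith) (by linarith) hnear hfar
  have hexp : finrank ℝ V * (4 * s / N) = 4 * s * finrank ℝ V / N := by ring
  rw [hexp] at h
  exact ⟨θ, hθ, C, hC, h⟩

lemma exists_rieszPotential_bubbleSum_rpow_mul_le (V : Submodule ℝ E) {s N a κ R C₀ C₁ C₂ : ℝ}
    (hs : 0 < s) (hN : N = finrank ℝ E - 2 * s) (hV : finrank ℝ V < N / 2) (hκ : 0 ≤ κ)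
    (ha : finrank ℝ V < a - κ) (haN : a < N) (hR : 0 ≤ R) (hC₀ : 0 < C₀) (hC₁ : 0 < C₁)
    (hC₁₂ : C₁ ≤ C₂) :
    ∃ θ > 0, ∃ C > 0, ∀ {ι : Type*} [Fintype ι] [Nonempty ι] {lam d : ℝ} {X P : ι → E}
      {Λ : ι → ℝ}, IsSeparatedIn V d X → 1 ≤ lam → lam ≤ d → (∀ i, ‖P i - X i‖ ≤ R) →
      (∀ i, Λ i ∈ Icc C₁ C₂) → ∀ x : E,
      rieszPotential volume N
          (fun y => bubbleSum C₀ N P Λ y ^ (4 * s / N) * (cutoff X lam κ y * decaySum X a y)) x ≤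
        ENNReal.ofReal (C * (cutoff X lam κ x * decaySum X (a + θ) x) +
          C * d ^ (-(4 * s * finrank ℝ V / N)) * (cutoff X lam κ x * decaySum X a x)) := by
  have hN0 : 0 < N := by linarith [Nat.cast_nonneg (α := ℝ) (finrank ℝ V)]
  obtain ⟨θ, hθ, C, hC, hpot⟩ :=
    exists_rieszPotential_decaySum_rpow_mul_le_of_lt_half V hs hN hV hκ ha haN
  set K := C₀ * (2 * (1 + R) ^ 2 * (C₂ + C₁⁻¹)) ^ (N / 2)
  have hK : 0 < K := by
    have := hC₁.trans_le hC₁₂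
    positivity
  refine ⟨θ, hθ, K ^ (4 * s / N) * C, by positivity,
    fun {ι} _ _ lam d X P Λ hX hlam hlamd hP hΛ x => ?_⟩
  have pointwise (y : E) :
      bubbleSum C₀ N P Λ y ^ (4 * s / N) * (cutoff X lam κ y * decaySum X a y) ≤
        K ^ (4 * s / N) *
          (decaySum X N y ^ (4 * s / N) * (cutoff X lam κ y * decaySum X a y)) := by
    rw [← mul_assoc (K ^ _), ← Real.mul_rpow hK.le (decaySum_nonneg X N y)]
    refine mul_le_mul_of_nonneg_right (Real.rpow_le_rpow ?_ ?_ (by positivity))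
      (mul_nonneg (cutoff_nonneg (by linarith)) (decaySum_nonneg X a y))
    · exact bubbleSum_nonneg hC₀.le (fun i => hC₁.le.trans (hΛ i).1) y
    · exact bubbleSum_le_decaySum hN0.le hC₀.le hC₁ hP hΛ y
  refine (rieszPotential_mono pointwise x).trans ?_
  rw [rieszPotential_const_mul (by positivity), mul_assoc, mul_assoc, mul_assoc, ← mul_add,
    ← mul_add, ENNReal.ofReal_mul (by positivity)]
  gcongr
  exact hpot hX hlam hlamd x

theorem stmt_7_general (V : Submodule ℝ E) {n k : ℕ} (hn : finrank ℝ E = n)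
    (hk : finrank ℝ V = k) {s a κ R C₀ C₁ C₂ : ℝ} (hs : 0 < s)
    (hkN : (k : ℝ) < ((n : ℝ) - 2 * s) / 2) (hκ : 0 ≤ κ) (hka : (k : ℝ) < a - κ)
    (haN : a < (n : ℝ) - 2 * s) (hR : 0 ≤ R) (hC₀ : 0 < C₀) (hC₁ : 0 < C₁) (hC₁₂ : C₁ ≤ C₂) :
    ∃ θ > 0, ∃ C > 0, ∀ {ι : Type*} [Fintype ι] [Nonempty ι] {lam d : ℝ} {X P : ι → E}
      {Λ : ι → ℝ}, IsSeparatedIn V d X → 1 ≤ lam → lam ≤ d → (∀ i, ‖P i - X i‖ ≤ R) →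
      (∀ i, Λ i ∈ Icc C₁ C₂) → ∀ x : E,
      Integrable (fun y => ‖x - y‖ ^ (-((n : ℝ) - 2 * s)) *
        bubbleSum C₀ ((n : ℝ) - 2 * s) P Λ y ^ (4 * s / ((n : ℝ) - 2 * s)) *
          (cutoff X lam κ y * decaySum X a y)) ∧
      (∫ y, ‖x - y‖ ^ (-((n : ℝ) - 2 * s)) *
        bubbleSum C₀ ((n : ℝ) - 2 * s) P Λ y ^ (4 * s / ((n : ℝ) - 2 * s)) *
          (cutoff X lam κ y * decaySum X a y)) ≤
        C * (cutoff X lam κ x * decaySum X (a + θ) x) +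
          C * d ^ (-(4 * s * k / ((n : ℝ) - 2 * s))) * (cutoff X lam κ x * decaySum X a x) := by
  subst hn hk
  obtain ⟨θ, hθ, C, hC, hpot⟩ := exists_rieszPotential_bubbleSum_rpow_mul_le V hs rfl hkN hκ hka
    haN hR hC₀ hC₁ hC₁₂
  refine ⟨θ, hθ, C, hC, fun {ι} _ _ lam d X P Λ hX hlam hlamd hP hΛ x => ?_⟩
  have hd : 0 ≤ d := by linarith
  have hγS (b : ℝ) (y : E) : 0 ≤ cutoff X lam κ y * decaySum X b y :=
    mul_nonneg (cutoff_nonneg (by linarith)) (decaySum_nonneg X b y)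
  have hW (y : E) : 0 ≤ bubbleSum C₀ (finrank ℝ E - 2 * s) P Λ y :=
    bubbleSum_nonneg hC₀.le (fun i => hC₁.le.trans (hΛ i).1) y
  simp only [mul_assoc (‖x - _‖ ^ (_ : ℝ))]
  set f : E → ℝ := fun y => bubbleSum C₀ (finrank ℝ E - 2 * s) P Λ y ^
    (4 * s / (finrank ℝ E - 2 * s)) * (cutoff X lam κ y * decaySum X a y)
  have hf : Measurable f := ((measurable_bubbleSum C₀ _ P Λ).pow_const _).mul
    ((measurable_cutoff X lam κ).mul (measurable_decaySum X a))
  have hf0 (y : E) : 0 ≤ f y := mul_nonneg (Real.rpow_nonneg (hW y) _) (hγS a y)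
  have hpot_f := hpot hX hlam hlamd hP hΛ x
  refine ⟨integrable_of_rieszPotential_ne_top hf hf0 (hpot_f.trans_lt ENNReal.ofReal_lt_top).ne,
    integral_le_of_rieszPotential_le hf hf0 ?_ hpot_f⟩
  have := hγS a x
  have := hγS (a + θ) x
  positivity

end Main

section Lattice

variable {n k : ℕ}

/-- The coordinate subspace `ℝ ^ k × {0}` of `ℝ ^ n`. -/
def coordinateSubspace (n k : ℕ) : Submodule ℝ (EuclideanSpace ℝ (Fin n)) where
  carrier := {x | ∀ j : Fin n, k ≤ (j : ℕ) → x j = 0}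
  add_mem' hx hy j hj := by simp [hx j hj, hy j hj]
  zero_mem' := by simp
  smul_mem' c x hx j hj := by simp [hx j hj]

lemma mem_coordinateSubspace {x : EuclideanSpace ℝ (Fin n)} :
    x ∈ coordinateSubspace n k ↔ ∀ j : Fin n, k ≤ (j : ℕ) → x j = 0 := Iff.rfl

lemma coordinateSubspace_eq_span (hkn : k ≤ n) :
    coordinateSubspace n k =
      Submodule.span ℝ (range (EuclideanSpace.basisFun (Fin n) ℝ ∘ Fin.castLE hkn)) := by
  rw [range_comp, Fin.range_castLE, ← OrthonormalBasis.coe_toBasis]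
  ext x
  rw [Basis.mem_span_image]
  simp [mem_coordinateSubspace, subset_def, not_imp_comm]

lemma finrank_coordinateSubspace (hkn : k ≤ n) : finrank ℝ (coordinateSubspace n k) = k := by
  rw [coordinateSubspace_eq_span hkn, finrank_span_eq_card
    ((EuclideanSpace.basisFun (Fin n) ℝ).orthonormal.linearIndependent.comp _
      (Fin.castLE_injective hkn)), Fintype.card_fin]

lemma latticeEnum.isSeparatedIn {m : ℕ} {d : ℝ}
    {X : Fin ((m + 1) ^ k) → EuclideanSpace ℝ (Fin n)} (hd : 0 ≤ d) (hX : latticeEnum n k m d X) :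
    IsSeparatedIn (coordinateSubspace n k) d X := by
  obtain ⟨hinj, hq, -⟩ := hX
  choose q _ hq0 hXq using hq
  refine ⟨fun i => mem_coordinateSubspace.2 fun j hj => by rw [hXq, hq0 i j hj, Int.cast_zero,
    mul_zero], fun i j hij => ?_⟩
  have hne : q i ≠ q j := fun h => hij (hinj (by ext c; rw [hXq, hXq, h]))
  obtain ⟨c, hc⟩ := Function.ne_iff.1 hne
  have gap : (1 : ℝ) ≤ |(q i c - q j c : ℝ)| := by
    exact_mod_cast Int.one_le_abs (sub_ne_zero.2 hc)
  calc d ≤ d * |(q i c - q j c : ℝ)| := le_mul_of_one_le_right hd gap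
    _ = ‖(X i - X j) c‖ := by
        rw [PiLp.sub_apply, hXq, hXq, ← mul_sub, Real.norm_eq_abs, abs_mul, abs_of_nonneg hd]
    _ ≤ ‖X i - X j‖ := PiLp.norm_apply_le _ c

end Lattice

theorem stmt_7 (n k : ℕ) (s β τ C₀ C₁ C₂ : ℝ) (hn0 : 0 < n) (hs0 : 0 < s) (hs1 : s < 1)
    (hn : 2 * s + 2 < (n : ℝ)) (hk1 : 1 ≤ k) (hk2 : (k : ℝ) < ((n : ℝ) - 2 * s) / 2)
    (hβ1 : (n : ℝ) - 2 * s < β) (hβ2 : β < (n : ℝ))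
    (hτ1 : (k : ℝ) < τ) (hτ2 : τ < ((n : ℝ) - 2 * s) / 2)
    (hC₀ : 0 < C₀) (hC₁ : 0 < C₁) (hC₁₂ : C₁ < C₂) :
    ∃ θ > (0 : ℝ), ∃ C > (0 : ℝ), ∀ m l : ℕ, 1 ≤ m → 1 ≤ l →
      ∀ lam : ℝ, lam = (l : ℝ) ^ (((n : ℝ) - 2 * s) / (β - (n : ℝ) + 2 * s)) →
      ∀ X : Fin ((m + 1) ^ k) → EuclideanSpace ℝ (Fin n), latticeEnum n k m (lam * l) X →
      ∀ P : Fin ((m + 1) ^ k) → EuclideanSpace ℝ (Fin n), (∀ i, ‖P i - X i‖ < 1 / 2) →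
      ∀ Λ : Fin ((m + 1) ^ k) → ℝ, (∀ i, Λ i ∈ Set.Icc C₁ C₂) →
      ∀ γ W : EuclideanSpace ℝ (Fin n) → ℝ,
      (∀ y, γ y = min (⨅ i, ((1 + ‖y - X i‖) / lam) ^ (τ - s)) 1) →
      (∀ y, W y = ∑ i, C₀ * (Λ i / (1 + Λ i ^ 2 * ‖y - P i‖ ^ 2)) ^ (((n : ℝ) - 2 * s) / 2)) →
      ∀ x : EuclideanSpace ℝ (Fin n),
        (∫ y : EuclideanSpace ℝ (Fin n),
            ‖x - y‖ ^ (-((n : ℝ) - 2 * s)) * W y ^ (4 * s / ((n : ℝ) - 2 * s)) *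
              (γ y * ∑ h, (1 + ‖y - X h‖) ^ (-(((n : ℝ) - 2 * s) / 2 + τ)))) ≤
          C * (γ x * ∑ h, (1 + ‖x - X h‖) ^ (-(((n : ℝ) - 2 * s) / 2 + τ + θ))) +
            C * (lam * l) ^ (-(4 * s * k / ((n : ℝ) - 2 * s))) *
              (γ x * ∑ h, (1 + ‖x - X h‖) ^ (-(((n : ℝ) - 2 * s) / 2 + τ))) := by
  have hkn : k ≤ n := by
    have : (k : ℝ) ≤ n := by linarith
    exact_mod_cast this
  obtain ⟨θ, hθ, C, hC, h⟩ := stmt_7_general (coordinateSubspace n k) (R := 1 / 2)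
    (a := ((n : ℝ) - 2 * s) / 2 + τ) (κ := τ - s) finrank_euclideanSpace_fin
    (finrank_coordinateSubspace hkn) hs0 hk2 (by linarith [Nat.one_le_cast (α := ℝ).2 hk1])
    (by linarith) (by linarith) (by norm_num) hC₀ hC₁ hC₁₂.le
  refine ⟨θ, hθ, C, hC, fun m l _ hl lam hlam X hX P hP Λ hΛ γ W hγ hW => ?_⟩
  obtain rfl : γ = cutoff X lam (τ - s) := funext hγ
  obtain rfl : W = bubbleSum C₀ (n - 2 * s) P Λ := funext hW
  have hl1 : (1 : ℝ) ≤ l := Nat.one_le_cast.2 hl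
  have hlam1 : 1 ≤ lam :=
    hlam ▸ Real.one_le_rpow hl1 (div_nonneg (by linarith) (by linarith))
  have hd : lam ≤ lam * l := le_mul_of_one_le_right (by linarith) hl1
  exact fun x => (h (hX.isSeparatedIn (by linarith)) hlam1 hd (fun i => (hP i).le) hΛ x).2
end
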